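/- arXiv:2302.05946 — 2 statements merged into one kernel-verified Lean document; each statement's English description precedes it below -/
import Mathlib

section
/- For every number field K there exists a constant C_K, depending only on K, such that every covering system of O_K whose moduli are pairwise distinct distinguishable ideals contains a modulus of norm at most C_K. -/
/-!
The proof is the distortion method. Write a common multiple of the moduli as a product of prime
powers and treat the primes in order of increasing norm, keeping a probability distribution on the
residues modulo the product `M` of the prime powers treated so far. To pass from `M` to `M * P ^ γ`,
spread the mass of each class modulo `M` uniformly over its lifts, and then move it away from the
classes whose modulus divides `M * P ^ γ` but not `M`: a fibre of which these classes cover a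
proportion `α` retains at most `α ^ 2` on them, at the price of a factor `2` in density. The mass of
a class modulo `I` thus stays below `2 ^ ω(I) / N(I)`, and the total mass retained at `P` is bounded
by the second moment of `α`, hence by `4 / N(P) ^ 2` times a sum over pairs of divisors of `M`. That
sum grows slower than any power of `N(P)`, so the primes of norm exceeding a suitable `Y` contribute
at most `1 / 4` altogether, since later steps do not change the masses of the classes modulo `M`.
There remain the moduli whose prime factors all have norm at most `Y`. The number of such primes is
bounded in terms of the ring, so if these moduli have large norm, their classes have total mass at
most `1 / 4` as well, and the classes cannot cover.
-/

set_option maxHeartbeats 1000000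
set_option synthInstance.maxHeartbeats 1000000

open scoped Classical
open NumberField

/-- `p` is the unique prime ideal factor of `I` of largest norm. -/
def IsPmin {K : Type*} [Field K] [NumberField K] (I p : Ideal (𝓞 K)) : Prop :=
  p.IsPrime ∧ p ∣ I ∧ ∀ q : Ideal (𝓞 K), q.IsPrime → q ∣ I → q ≠ p →
    Ideal.absNorm q < Ideal.absNorm p

/-- A nonzero proper ideal is distinguishable if it has a unique prime factor of largest norm. -/
def Distinguishable {K : Type*} [Field K] [NumberField K] (I : Ideal (𝓞 K)) : Prop :=
  I ≠ ⊥ ∧ I ≠ ⊤ ∧ ∃ p : Ideal (𝓞 K), IsPmin I p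

/-! ### Sums over rational primes -/

lemma exists_primeCounting_le_linear {ε : ℝ} (hε : 0 < ε) :
    ∃ C : ℝ, 0 ≤ C ∧ ∀ n : ℕ, (Nat.primeCounting n : ℝ) ≤ ε * n + C := by
  have hlog : ∀ᶠ x : ℝ in Filter.atTop, (Real.log 4 + 1) / ε ≤ Real.log x :=
    Real.tendsto_log_atTop.eventually_ge_atTop _
  obtain ⟨N, hN⟩ := Filter.eventually_atTop.1 (tendsto_natCast_atTop_atTop.eventually
    ((Chebyshev.eventually_primeCounting_le one_pos).and
      (hlog.and (Filter.eventually_gt_atTop 1))))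
  refine ⟨Nat.primeCounting N, by positivity, fun n => ?_⟩
  rcases le_total n N with hn | hn
  · have : (Nat.primeCounting n : ℝ) ≤ Nat.primeCounting N :=
      mod_cast Nat.monotone_primeCounting hn
    exact this.trans (le_add_of_nonneg_left (by positivity))
  · obtain ⟨hpi, hlog, hn1⟩ := hN n hn
    rw [Nat.floor_natCast] at hpi
    have hlogn : 0 < Real.log n := Real.log_pos hn1
    calc (Nat.primeCounting n : ℝ) ≤ (Real.log 4 + 1) * n / Real.log n := hpi
      _ = (Real.log 4 + 1) / Real.log n * n := by ring
      _ ≤ ε * n := by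
        gcongr
        rwa [div_le_comm₀ hlogn hε]
      _ ≤ ε * n + Nat.primeCounting N := le_add_of_nonneg_right (by positivity)

lemma sum_range_mul_le_of_antitone {f c d : ℕ → ℝ} (hf : Antitone f) (hf0 : ∀ n, 0 ≤ f n)
    (hcd : ∀ n, ∑ k ∈ Finset.range n, c k ≤ ∑ k ∈ Finset.range n, d k) (n : ℕ) :
    ∑ k ∈ Finset.range n, f k * c k ≤ ∑ k ∈ Finset.range n, f k * d k := by
  have hgap : ∀ n, 0 ≤ ∑ k ∈ Finset.range n, (d k - c k) := fun n => by
    rw [Finset.sum_sub_distrib]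
    exact sub_nonneg.2 (hcd n)
  have habel : ∀ n, f n * ∑ k ∈ Finset.range n, (d k - c k)
      ≤ ∑ k ∈ Finset.range n, f k * (d k - c k) := fun n => by
    induction n with
    | zero => simp
    | succ n ih =>
      calc f (n + 1) * ∑ k ∈ Finset.range (n + 1), (d k - c k)
          ≤ f n * ∑ k ∈ Finset.range (n + 1), (d k - c k) :=
            mul_le_mul_of_nonneg_right (hf n.le_succ) (hgap _)
        _ ≤ _ := by
            rw [Finset.sum_range_succ, Finset.sum_range_succ, mul_add]
            gcongr
  have := (mul_nonneg (hf0 n) (hgap n)).trans (habel n)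
  simpa only [mul_sub, Finset.sum_sub_distrib, sub_nonneg] using this

-- A weak form of Mertens' second theorem, from `π(n) = o(n)` by partial summation.
lemma exists_sum_primesLE_inv_le {ε : ℝ} (hε : 0 < ε) :
    ∃ C : ℝ, ∀ n : ℕ, ∑ p ∈ Nat.primesLE n, (p : ℝ)⁻¹ ≤ ε * Real.log n + C := by
  obtain ⟨C, hC, hpi⟩ := exists_primeCounting_le_linear hε
  have hsum : ∀ (f : ℕ → ℝ) (n : ℕ), ∑ p ∈ Nat.primesLE n, f p
      = ∑ k ∈ Finset.range n, f (k + 1) * if (k + 1).Prime then 1 else 0 := fun f n => by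
    simp only [mul_ite, mul_one, mul_zero]
    rw [← Finset.sum_filter]
    refine (Finset.sum_bij (fun k _ => k + 1) (fun k hk => ?_) (fun _ _ _ _ h => by simpa using h)
      (fun p hp => ?_) (fun _ _ => rfl)).symm
    · simp only [Finset.mem_filter, Finset.mem_range, Nat.mem_primesLE] at hk ⊢
      exact ⟨hk.1, hk.2⟩
    · rw [Nat.mem_primesLE] at hp
      have hp0 := hp.2.pos
      refine ⟨p - 1, ?_, Nat.sub_add_cancel hp0⟩
      simp only [Finset.mem_filter, Finset.mem_range, Nat.sub_add_cancel hp0]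
      exact ⟨by omega, hp.2⟩
  refine ⟨ε + C, fun n => ?_⟩
  calc ∑ p ∈ Nat.primesLE n, (p : ℝ)⁻¹
      = ∑ k ∈ Finset.range n, ((k + 1 : ℕ) : ℝ)⁻¹ * if (k + 1).Prime then 1 else 0 :=
        hsum (fun p => (p : ℝ)⁻¹) n
    _ ≤ ∑ k ∈ Finset.range n, ((k + 1 : ℕ) : ℝ)⁻¹ * (ε + if k = 0 then C else 0) := by
        refine sum_range_mul_le_of_antitone (f := fun k => ((k + 1 : ℕ) : ℝ)⁻¹)
          (fun k l hkl => ?_) (fun k => by positivity) (fun m => ?_) n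
        · have : (k : ℝ) ≤ l := mod_cast hkl
          push_cast
          gcongr
        · have hcount := hpi m
          rw [← Nat.primesLE_card_eq_primeCounting, Finset.cast_card, hsum (fun _ => 1)] at hcount
          simp only [one_mul] at hcount
          rcases m.eq_zero_or_pos with rfl | hm
          · simp
          · simpa [Finset.sum_add_distrib, hm, mul_comm] using hcount
    _ = ε * harmonic n + ∑ k ∈ Finset.range n, if k = 0 then ((k + 1 : ℕ) : ℝ)⁻¹ * C else 0 := by
        push_cast [harmonic]
        simp only [mul_add, Finset.sum_add_distrib, mul_ite, mul_zero, mul_comm ε, Finset.sum_mul]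
    _ ≤ ε * (1 + Real.log n) + C := by
        gcongr
        · exact harmonic_le_one_add_log n
        · rw [Finset.sum_ite_eq' (Finset.range n) 0]
          split_ifs <;> simp [hC]
    _ = ε * Real.log n + (ε + C) := by ring

open Ideal IsDedekindDomain

/-! ### Sums over prime ideals -/

section PrimeIdeals

variable {R : Type*} [CommRing R] [IsDedekindDomain R]

/-- The rational prime below a prime ideal `v`, encoded as the norm of `v ∩ ℤ`. -/
noncomputable def primeBelow (v : HeightOneSpectrum R) : ℕ := absNorm (v.asIdeal.under ℤ)

variable [Module.Finite ℤ R]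

lemma primeBelow_prime (v : HeightOneSpectrum R) : (primeBelow v).Prime :=
  have : NeZero v.asIdeal := ⟨v.ne_bot⟩
  Nat.absNorm_under_prime v.asIdeal

variable [Module.Free ℤ R]

lemma one_lt_absNorm (v : HeightOneSpectrum R) : 1 < absNorm v.asIdeal := by
  have := finiteQuotientOfFreeOfNeBot v.asIdeal v.ne_bot
  have h0 : absNorm v.asIdeal ≠ 0 := (absNorm_ne_zero_iff _).2 this
  have h1 : absNorm v.asIdeal ≠ 1 := fun h => v.isPrime.ne_top (absNorm_eq_one_iff.1 h)
  omega

lemma primeBelow_le_absNorm (v : HeightOneSpectrum R) : primeBelow v ≤ absNorm v.asIdeal :=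
  Nat.le_of_dvd (one_lt_absNorm v).pos (Int.absNorm_under_dvd_absNorm _)

lemma card_filter_primeBelow_eq_le (T : Finset (HeightOneSpectrum R)) {p : ℕ} (hp : p.Prime) :
    (T.filter (primeBelow · = p)).card ≤ Module.finrank ℤ R := by
  set U := T.filter (primeBelow · = p)
  have hU : ∀ v ∈ U, primeBelow v = p := fun v hv => (Finset.mem_filter.1 hv).2
  have hdvd : ∏ v ∈ U, v.asIdeal ∣ span {(p : R)} := by
    rw [← Finset.prod_image (g := HeightOneSpectrum.asIdeal) (f := fun I => I)
      fun _ _ _ _ => HeightOneSpectrum.ext]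
    refine Finset.prod_primes_dvd _ (Finset.forall_mem_image.2 fun v _ => v.prime)
      (Finset.forall_mem_image.2 fun v hv => ?_)
    rw [dvd_iff_le, span_singleton_le_iff_mem, ← hU v hv]
    exact Int.absNorm_under_mem v.asIdeal
  have hpow : p ^ U.card ≤ p ^ Module.finrank ℤ R :=
    calc p ^ U.card ≤ ∏ v ∈ U, absNorm v.asIdeal :=
          Finset.pow_card_le_prod _ _ _ fun v hv => hU v hv ▸ primeBelow_le_absNorm v
      _ = absNorm (∏ v ∈ U, v.asIdeal) := (map_prod _ _ _).symm
      _ ≤ absNorm (span {(p : R)}) := Nat.le_of_dvd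
          (by rw [absNorm_span_natCast]; exact pow_pos hp.pos _) (map_dvd absNorm hdvd)
      _ = p ^ Module.finrank ℤ R := absNorm_span_natCast p
  exact (Nat.pow_le_pow_iff_right hp.one_lt).1 hpow

lemma card_le_finrank_mul_primeCounting {T : Finset (HeightOneSpectrum R)} {n : ℕ}
    (hT : ∀ v ∈ T, absNorm v.asIdeal ≤ n) :
    T.card ≤ Module.finrank ℤ R * Nat.primeCounting n := by
  rw [← Nat.primesLE_card_eq_primeCounting]
  exact Finset.card_le_mul_card_image_of_maps_to
    (fun v hv => Nat.mem_primesLE.2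
      ⟨(primeBelow_le_absNorm v).trans (hT v hv), primeBelow_prime v⟩) _
    fun _ hp => card_filter_primeBelow_eq_le T (Nat.mem_primesLE.1 hp).2

lemma sum_absNorm_le_finrank_mul_sum {f : ℕ → ℝ} (hf0 : ∀ n, 0 ≤ f n)
    (hf : AntitoneOn f (Set.Ioi 0)) (T : Finset (HeightOneSpectrum R)) :
    ∑ v ∈ T, f (absNorm v.asIdeal) ≤ Module.finrank ℤ R * ∑ p ∈ T.image primeBelow, f p :=
  calc ∑ v ∈ T, f (absNorm v.asIdeal) ≤ ∑ v ∈ T, f (primeBelow v) :=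
        Finset.sum_le_sum fun v _ => hf (primeBelow_prime v).pos (one_lt_absNorm v).pos
          (primeBelow_le_absNorm v)
    _ = ∑ p ∈ T.image primeBelow, (T.filter (primeBelow · = p)).card * f p := by
        simp only [← nsmul_eq_mul, Finset.sum_comp]
    _ ≤ ∑ p ∈ T.image primeBelow, Module.finrank ℤ R * f p := by
        refine Finset.sum_le_sum (Finset.forall_mem_image.2 fun v _ => ?_)
        gcongr
        · exact hf0 _
        · exact card_filter_primeBelow_eq_le T (primeBelow_prime v)
    _ = _ := (Finset.mul_sum _ _ _).symm

lemma exists_prod_one_add_div_absNorm_le {c ε : ℝ} (hc : 0 < c) (hε : 0 < ε) :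
    ∃ C : ℝ, 0 < C ∧ ∀ (T : Finset (HeightOneSpectrum R)) (n : ℕ), 0 < n →
      (∀ v ∈ T, absNorm v.asIdeal ≤ n) →
        ∏ v ∈ T, (1 + c / absNorm v.asIdeal) ≤ C * (n : ℝ) ^ ε := by
  set r := Module.finrank ℤ R
  have hr : (0 : ℝ) < r := mod_cast Module.finrank_pos
  obtain ⟨C, hC⟩ := exists_sum_primesLE_inv_le (ε := ε / (c * r)) (by positivity)
  refine ⟨Real.exp (c * r * C), Real.exp_pos _, fun T n hn hT => ?_⟩
  have hprimes : ∑ p ∈ T.image primeBelow, (p : ℝ)⁻¹ ≤ ∑ p ∈ Nat.primesLE n, (p : ℝ)⁻¹ := by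
    refine Finset.sum_le_sum_of_subset_of_nonneg (Finset.image_subset_iff.2 fun v hv => ?_)
      fun _ _ _ => by positivity
    exact Nat.mem_primesLE.2 ⟨(primeBelow_le_absNorm v).trans (hT v hv), primeBelow_prime v⟩
  have hanti : AntitoneOn (fun k : ℕ => (k : ℝ)⁻¹) (Set.Ioi 0) := fun k (hk : 0 < k) l _ hkl => by
    have : (0 : ℝ) < k := mod_cast hk
    dsimp only
    gcongr
  calc ∏ v ∈ T, (1 + c / absNorm v.asIdeal)
      ≤ ∏ v ∈ T, Real.exp (c / absNorm v.asIdeal) :=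
        Finset.prod_le_prod (fun _ _ => by positivity) fun v _ => by
          rw [add_comm]
          exact Real.add_one_le_exp _
    _ = Real.exp (c * ∑ v ∈ T, (absNorm v.asIdeal : ℝ)⁻¹) := by
        rw [← Real.exp_sum, Finset.mul_sum]
        rfl
    _ ≤ Real.exp (c * (r * (ε / (c * r) * Real.log n + C))) := by
        gcongr
        refine (sum_absNorm_le_finrank_mul_sum (fun _ => by positivity) hanti T).trans ?_
        gcongr
        exact hprimes.trans (hC n)
    _ = Real.exp (c * r * C) * (n : ℝ) ^ ε := by
        rw [Real.rpow_def_of_pos (mod_cast hn), ← Real.exp_add]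
        congr 1
        field_simp
        ring

lemma summable_absNorm_rpow_inv {s : ℝ} (hs : 1 < s) :
    Summable fun v : HeightOneSpectrum R => ((absNorm v.asIdeal : ℝ) ^ s)⁻¹ := by
  have hsum : Summable fun k : ℕ => ((k : ℝ) ^ s)⁻¹ := Real.summable_nat_rpow_inv.2 hs
  have hanti : AntitoneOn (fun k : ℕ => ((k : ℝ) ^ s)⁻¹) (Set.Ioi 0) :=
    fun k (hk : 0 < k) l _ hkl => by
      have : (0 : ℝ) < k := mod_cast hk
      dsimp only
      gcongr
  refine summable_of_sum_le (c := Module.finrank ℤ R * ∑' k : ℕ, ((k : ℝ) ^ s)⁻¹)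
    (fun _ => by positivity) fun T => ?_
  refine (sum_absNorm_le_finrank_mul_sum (fun _ => by positivity) hanti T).trans ?_
  gcongr
  exact hsum.sum_le_tsum _ fun _ _ => by positivity

lemma exists_sum_absNorm_rpow_inv_le {s c : ℝ} (hs : 1 < s) (hc : 0 < c) :
    ∃ Y : ℕ, ∀ T : Finset (HeightOneSpectrum R), (∀ v ∈ T, Y < absNorm v.asIdeal) →
      ∑ v ∈ T, ((absNorm v.asIdeal : ℝ) ^ s)⁻¹ ≤ c := by
  obtain ⟨U, hU⟩ := summable_iff_vanishing_norm.1 (summable_absNorm_rpow_inv (R := R) hs) c hc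
  obtain ⟨Y, hY⟩ := (U.image fun v => absNorm v.asIdeal).exists_le
  refine ⟨Y, fun T hT => (Real.le_norm_self _).trans (hU T ?_).le⟩
  exact Finset.disjoint_left.2 fun v hv hvU =>
    (hT v hv).not_ge (hY _ (Finset.mem_image_of_mem _ hvU))

end PrimeIdeals

/-! ### Finitely additive probabilities -/

section Functionals

variable {Ω ι : Type*}

/-- The mass that a positive functional `E` gives to `A`. A positive functional `E` with `E 1 = 1`
plays the role of a finitely additive probability on all subsets of `Ω`. -/
noncomputable def prob (E : (Ω → ℝ) →ₚ[ℝ] ℝ) (A : Set Ω) : ℝ := E (A.indicator 1)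

lemma prob_mono (E : (Ω → ℝ) →ₚ[ℝ] ℝ) {A B : Set Ω} (h : A ⊆ B) : prob E A ≤ prob E B :=
  OrderHomClass.mono E (Set.indicator_le_indicator_of_subset h fun _ => zero_le_one)

lemma prob_nonneg (E : (Ω → ℝ) →ₚ[ℝ] ℝ) (A : Set Ω) : 0 ≤ prob E A :=
  map_nonneg E (Set.indicator_nonneg fun _ _ => zero_le_one)

lemma prob_empty (E : (Ω → ℝ) →ₚ[ℝ] ℝ) : prob E ∅ = 0 := by
  rw [prob, Set.indicator_empty', map_zero]

lemma prob_univ (E : (Ω → ℝ) →ₚ[ℝ] ℝ) : prob E Set.univ = E 1 := by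
  rw [prob, Set.indicator_univ]

lemma prob_le_one {E : (Ω → ℝ) →ₚ[ℝ] ℝ} (hE : E 1 = 1) (A : Set Ω) : prob E A ≤ 1 := by
  rw [← hE, ← prob_univ]
  exact prob_mono E (Set.subset_univ A)

lemma prob_union_le (E : (Ω → ℝ) →ₚ[ℝ] ℝ) (A B : Set Ω) :
    prob E (A ∪ B) ≤ prob E A + prob E B := by
  rw [prob, prob, prob, ← map_add]
  refine OrderHomClass.mono E fun x => ?_
  by_cases hA : x ∈ A <;> by_cases hB : x ∈ B <;> simp [hA, hB]

lemma prob_biUnion_le (E : (Ω → ℝ) →ₚ[ℝ] ℝ) (s : Finset ι) (A : ι → Set Ω) :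
    prob E (⋃ i ∈ s, A i) ≤ ∑ i ∈ s, prob E (A i) := by
  induction s using Finset.induction_on with
  | empty => simp [prob_empty]
  | insert i s hi ih =>
    rw [Finset.set_biUnion_insert, Finset.sum_insert hi]
    exact (prob_union_le E _ _).trans (by gcongr)

/-- The mixture of the functionals `κ x` when `x` is drawn according to `E`. -/
noncomputable def mixture (E : (Ω → ℝ) →ₚ[ℝ] ℝ) (κ : Ω → (Ω → ℝ) →ₚ[ℝ] ℝ) : (Ω → ℝ) →ₚ[ℝ] ℝ :=
  .mk₀ (E.toLinearMap ∘ₗ LinearMap.pi fun x => (κ x).toLinearMap) fun _ hf =>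
    map_nonneg E fun x => map_nonneg (κ x) hf

lemma mixture_apply (E : (Ω → ℝ) →ₚ[ℝ] ℝ) (κ : Ω → (Ω → ℝ) →ₚ[ℝ] ℝ) (f : Ω → ℝ) :
    mixture E κ f = E fun x => κ x f := rfl

/-- The functional with density `ψ` relative to `E`. -/
noncomputable def withDensity (E : (Ω → ℝ) →ₚ[ℝ] ℝ) {ψ : Ω → ℝ} (hψ : 0 ≤ ψ) :
    (Ω → ℝ) →ₚ[ℝ] ℝ :=
  .mk₀ (E.toLinearMap ∘ₗ LinearMap.mulLeft ℝ ψ) fun _ hf => map_nonneg E (mul_nonneg hψ hf)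

lemma withDensity_apply (E : (Ω → ℝ) →ₚ[ℝ] ℝ) {ψ : Ω → ℝ} (hψ : 0 ≤ ψ) (f : Ω → ℝ) :
    withDensity E hψ f = E (ψ * f) := rfl

/-- The uniform average over the points `r i`, counted with multiplicity. -/
noncomputable def average [Fintype ι] (r : ι → Ω) : (Ω → ℝ) →ₚ[ℝ] ℝ :=
  .mk₀ ((Fintype.card ι : ℝ)⁻¹ • ∑ i, LinearMap.proj (r i)) fun f hf => by
    simpa using mul_nonneg (by positivity) (Finset.sum_nonneg fun i _ => hf (r i))

lemma average_apply [Fintype ι] (r : ι → Ω) (f : Ω → ℝ) :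
    average r f = (Fintype.card ι : ℝ)⁻¹ * ∑ i, f (r i) := by
  change ((Fintype.card ι : ℝ)⁻¹ • ∑ i, LinearMap.proj (r i) : (Ω → ℝ) →ₗ[ℝ] ℝ) f = _
  simp

lemma prob_average [Fintype ι] (r : ι → Ω) (A : Set Ω) :
    prob (average r) A = Nat.card (r ⁻¹' A) / Nat.card ι := by
  rw [prob, average_apply, Nat.card_eq_fintype_card, inv_mul_eq_div]
  simp [Set.indicator_apply, Fintype.card_subtype]

lemma exists_distortion_weights (α : ℝ) :
    ∃ a b : ℝ, a ≤ 2 ∧ 0 ≤ a ∧ a + b ≤ 2 ∧ 0 ≤ a + b ∧ a + b * α = 1 ∧ (a + b) * α ≤ α ^ 2 := by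
  rcases lt_or_ge α (1 / 2) with h | h
  · have hpos : 0 < 1 - α := by linarith
    refine ⟨(1 - α)⁻¹, -(1 - α)⁻¹, ?_, by positivity, by simp, by simp, by field_simp; ring,
      by simp [sq_nonneg]⟩
    rw [inv_le_comm₀ hpos two_pos]
    linarith
  · have hpos : 0 < α := by linarith
    have hinv : α⁻¹ ≤ 2 := by
      rw [inv_le_comm₀ hpos two_pos]
      linarith
    refine ⟨2, -α⁻¹, le_rfl, two_pos.le, by linarith [inv_pos.2 hpos], by linarith, ?_, ?_⟩
    · field_simp
      norm_num
    · rw [add_mul, neg_mul, inv_mul_cancel₀ hpos.ne']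
      nlinarith [sq_nonneg (α - 1)]

/- The distortion step: the mass of `B` is moved away from `B`, completely if `B` is small and as
far as a density bounded by `2` permits otherwise, since then `2α - 1 ≤ α²`. -/
lemma exists_distortion {U : (Ω → ℝ) →ₚ[ℝ] ℝ} (hU : U 1 = 1) (B : Set Ω) :
    ∃ κ : (Ω → ℝ) →ₚ[ℝ] ℝ, κ 1 = 1 ∧ (∀ A, prob κ A ≤ 2 * prob U A) ∧
      prob κ B ≤ prob U B ^ 2 := by
  obtain ⟨a, b, ha2, ha0, hab2, hab0, hmass, hB⟩ := exists_distortion_weights (prob U B)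
  set ψ : Ω → ℝ := a • (1 : Ω → ℝ) + b • B.indicator 1 with hψ
  have hψB : ψ * B.indicator 1 = (a + b) • B.indicator (1 : Ω → ℝ) := by
    funext x
    by_cases hx : x ∈ B <;> simp [hψ, hx]
  have hbounds : ∀ x, 0 ≤ ψ x ∧ ψ x ≤ 2 := fun x => by
    by_cases hx : x ∈ B <;> simp [hψ, hx, ha0, ha2, hab0, hab2]
  refine ⟨withDensity U fun x => (hbounds x).1, ?_, fun A => ?_, ?_⟩
  · rw [withDensity_apply, mul_one, hψ, map_add, map_smul, map_smul, hU]
    simpa [prob] using hmass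
  · rw [prob, prob, withDensity_apply, ← smul_eq_mul (2 : ℝ), ← map_smul]
    refine OrderHomClass.mono U fun x => ?_
    exact mul_le_mul_of_nonneg_right (hbounds x).2 (Set.indicator_nonneg (fun _ _ => zero_le_one) x)
  · rw [prob, withDensity_apply, hψB, map_smul]
    exact hB

end Functionals

/-! ### Residue classes -/

section ResidueClasses

variable {R ι : Type*} [CommRing R]

/-- The residue class `c + J`. -/
def residueClass (c : R) (J : Ideal R) : Set R := {x | x - c ∈ J}

lemma mem_residueClass {x c : R} {J : Ideal R} : x ∈ residueClass c J ↔ x - c ∈ J := Iff.rfl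

lemma mem_residueClass_iff_mk_eq {x c : R} {J : Ideal R} :
    x ∈ residueClass c J ↔ Ideal.Quotient.mk J x = Ideal.Quotient.mk J c := Ideal.Quotient.eq.symm

lemma mem_residueClass_comm {x y : R} {J : Ideal R} :
    x ∈ residueClass y J ↔ y ∈ residueClass x J := by
  rw [mem_residueClass_iff_mk_eq, mem_residueClass_iff_mk_eq, eq_comm]

lemma residueClass_mono (c : R) {I J : Ideal R} (h : I ≤ J) :
    residueClass c I ⊆ residueClass c J := fun _ hx => h hx

lemma residueClass_inf (c : R) (I J : Ideal R) :
    residueClass c (I ⊓ J) = residueClass c I ∩ residueClass c J := rfl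

lemma residueClass_eq_of_mem {x c : R} {J : Ideal R} (hx : x ∈ residueClass c J) :
    residueClass x J = residueClass c J := by
  ext y
  rw [mem_residueClass_iff_mk_eq, mem_residueClass_iff_mk_eq, mem_residueClass_iff_mk_eq.1 hx]

lemma natCard_eq_mul_natCard_fiber {G H : Type*} [AddGroup G] [AddGroup H] {φ : G →+ H}
    (hφ : Function.Surjective φ) (h : H) : Nat.card G = Nat.card H * Nat.card (φ ⁻¹' {h}) := by
  rw [← Nat.card_prod]
  exact Nat.card_congr ((Equiv.sigmaFiberEquiv φ).symm.trans
    ((Equiv.sigmaCongrRight fun h' => φ.fiberEquivOfSurjective hφ h' h).trans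
      (Equiv.sigmaEquivProd H _)))

/- The uniform distribution on the residues modulo `N`, realised inside the class `x + M` by the
Chinese remainder theorem. -/
lemma exists_uniform_on_residueClass {M N : Ideal R} (hMN : IsCoprime M N) [Finite (R ⧸ N)]
    (x : R) :
    ∃ U : (R → ℝ) →ₚ[ℝ] ℝ, U 1 = 1 ∧ prob U (residueClass x M)ᶜ = 0 ∧
      ∀ (c : R) (J : Ideal R), N ≤ J → prob U (residueClass c J) = (Nat.card (R ⧸ J) : ℝ)⁻¹ := by
  have := Fintype.ofFinite (R ⧸ N)
  have hlift : ∀ y : R ⧸ N, ∃ z, z ∈ residueClass x M ∧ Ideal.Quotient.mk N z = y := fun y => by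
    obtain ⟨b, rfl⟩ := Ideal.Quotient.mk_surjective y
    obtain ⟨m, hm, n, hn, hmn⟩ := isCoprime_iff_exists.1 hMN
    refine ⟨n * x + m * b, ?_, Ideal.Quotient.eq.2 ?_⟩
    · rw [mem_residueClass, show n * x + m * b - x = m * (b - x) by linear_combination hmn * x]
      exact M.mul_mem_right _ hm
    · rw [show n * x + m * b - b = n * (x - b) by linear_combination hmn * b]
      exact N.mul_mem_right _ hn
  choose r hrM hrN using hlift
  have hcard : Nat.card (R ⧸ N) ≠ 0 := Nat.card_pos.ne'
  refine ⟨average r, ?_, ?_, fun c J hNJ => ?_⟩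
  · rw [← prob_univ, prob_average, Set.preimage_univ, Nat.card_univ, div_self (mod_cast hcard)]
  · have hempty : r ⁻¹' (residueClass x M)ᶜ = ∅ :=
      Set.eq_empty_of_forall_notMem fun y hy => hy (hrM y)
    rw [prob_average, hempty]
    simp
  · have hfib : r ⁻¹' residueClass c J
        = (Ideal.Quotient.factor hNJ).toAddMonoidHom ⁻¹' {Ideal.Quotient.mk J c} := by
      ext y
      conv_rhs => rw [← hrN y]
      exact mem_residueClass_iff_mk_eq
    have hmul := natCard_eq_mul_natCard_fiber (φ := (Ideal.Quotient.factor hNJ).toAddMonoidHom)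
      (Ideal.Quotient.factor_surjective hNJ) (Ideal.Quotient.mk J c)
    rw [hmul] at hcard
    rw [prob_average, hfib, hmul, Nat.cast_mul, ← one_div,
      div_eq_div_iff (mod_cast hcard) (mod_cast left_ne_zero_of_mul hcard)]
    ring

/-- The fibre measures of the construction: uniform distributions on `x + M`, distorted so as to
avoid a union of residue classes. -/
lemma exists_avoiding_on_residueClass {M N : Ideal R} (hMN : IsCoprime M N) [Finite (R ⧸ N)]
    (x : R) (s : Finset ι) (c : ι → R) {J : ι → Ideal R} (hJ : ∀ i ∈ s, N ≤ J i) :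
    ∃ κ : (R → ℝ) →ₚ[ℝ] ℝ, κ 1 = 1 ∧ prob κ (residueClass x M)ᶜ = 0 ∧
      (∀ (b : R) (I : Ideal R), N ≤ I →
        prob κ (residueClass b I) ≤ 2 * (Nat.card (R ⧸ I) : ℝ)⁻¹) ∧
      prob κ (⋃ i ∈ s, residueClass (c i) (J i)) ≤ (∑ i ∈ s, (Nat.card (R ⧸ J i) : ℝ)⁻¹) ^ 2 := by
  obtain ⟨U, hU1, hUx, hU⟩ := exists_uniform_on_residueClass hMN x
  obtain ⟨κ, hκ1, hκ2, hκ⟩ := exists_distortion hU1 (⋃ i ∈ s, residueClass (c i) (J i))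
  refine ⟨κ, hκ1, le_antisymm ?_ (prob_nonneg κ _), fun b I hI => ?_, hκ.trans ?_⟩
  · simpa [hUx] using hκ2 (residueClass x M)ᶜ
  · simpa [hU b I hI] using hκ2 (residueClass b I)
  · gcongr
    · exact prob_nonneg U _
    · exact (prob_biUnion_le U s _).trans_eq (Finset.sum_congr rfl fun i hi => hU _ _ (hJ i hi))

end ResidueClasses

/-! ### Divisor sums -/

lemma sum_range_sum_range_max (g : ℕ → ℝ) (n : ℕ) :
    ∑ i ∈ Finset.range n, ∑ j ∈ Finset.range n, g (max i j)
      = ∑ k ∈ Finset.range n, (2 * k + 1) * g k := by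
  induction n with
  | zero => simp
  | succ n ih =>
    have hrow : ∑ i ∈ Finset.range n, g (max i n) = n * g n := by
      rw [Finset.sum_congr rfl fun i hi => by rw [max_eq_right (Finset.mem_range.1 hi).le]]
      simp
    have hcol : ∑ j ∈ Finset.range n, g (max n j) = n * g n := by
      simpa only [max_comm n] using hrow
    simp only [Finset.sum_range_succ, Finset.sum_add_distrib, ih, hrow, hcol, max_self]
    ring

lemma sum_range_linear_div_two_pow_le (n : ℕ) :
    ∑ k ∈ Finset.range n, (2 * k + 3 : ℝ) / 2 ^ k ≤ 10 := by
  have hsum : ∑ k ∈ Finset.range n, (2 * k + 3 : ℝ) / 2 ^ k = 10 - (4 * n + 10) / 2 ^ n := by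
    induction n with
    | zero => simp
    | succ n ih =>
      rw [Finset.sum_range_succ, ih, pow_succ]
      push_cast
      field_simp
      ring
  rw [hsum, sub_le_self_iff]
  positivity

lemma sum_range_inv_pow_succ_le {q : ℝ} (hq : 2 ≤ q) (n : ℕ) :
    ∑ j ∈ Finset.range n, (q ^ (j + 1))⁻¹ ≤ 2 / q :=
  calc ∑ j ∈ Finset.range n, (q ^ (j + 1))⁻¹ ≤ ∑ j ∈ Finset.range n, (1 / 2) ^ j * q⁻¹ := by
        refine Finset.sum_le_sum fun j _ => ?_
        rw [pow_succ, mul_inv, ← inv_pow, one_div]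
        gcongr
    _ ≤ 2 * q⁻¹ := by
        rw [← Finset.sum_mul]
        gcongr
        exact sum_geometric_two_le n

section DivisorSums

variable {R : Type*} [CommRing R]

lemma mul_pow_inf_mul_pow {I J P : Ideal R} {i j : ℕ} (hI : IsCoprime I (P ^ i))
    (hJ : IsCoprime J (P ^ j)) (hIJ : IsCoprime (I ⊓ J) (P ^ max i j)) :
    I * P ^ i ⊓ J * P ^ j = (I ⊓ J) * P ^ max i j := by
  have hmax : P ^ max i j = P ^ i ⊓ P ^ j := by
    rcases le_total i j with h | h
    · rw [max_eq_right h, inf_eq_right.2 (pow_le_pow_right h)]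
    · rw [max_eq_left h, inf_eq_left.2 (pow_le_pow_right h)]
  rw [mul_eq_inf_of_isCoprime hI, mul_eq_inf_of_isCoprime hJ, mul_eq_inf_of_isCoprime hIJ,
    inf_inf_inf_comm, hmax]

/-- The finite set of divisors of a nonzero ideal of a Dedekind domain; it is `∅` (a junk value)
whenever there are infinitely many. -/
noncomputable def divisors (I : Ideal R) : Finset (Ideal R) :=
  if h : {J | J ∣ I}.Finite then h.toFinset else ∅

lemma dvd_of_mem_divisors {I J : Ideal R} (h : J ∈ divisors I) : J ∣ I := by
  unfold divisors at h
  split_ifs at h with hfin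
  · simpa using h
  · simp at h

variable [IsDedekindDomain R]

lemma mem_divisors {I J : Ideal R} (hI : I ≠ ⊥) : J ∈ divisors I ↔ J ∣ I := by
  have := UniqueFactorizationMonoid.fintypeSubtypeDvd I hI
  have hfin : {J | J ∣ I}.Finite :=
    Set.finite_coe_iff.1 (Finite.of_fintype {J // J ∣ I})
  simp [divisors, hfin]

lemma divisors_one : divisors (1 : Ideal R) = {1} := by
  ext J
  rw [mem_divisors one_ne_zero, Finset.mem_singleton, ← isUnit_iff_dvd_one, isUnit_iff, one_eq_top]

lemma isCoprime_pow_of_not_dvd {v : HeightOneSpectrum R} {I : Ideal R} (h : ¬ v.asIdeal ∣ I)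
    (n : ℕ) : IsCoprime I (v.asIdeal ^ n) := by
  refine IsCoprime.pow_right ?_
  rw [isCoprime_comm, isCoprime_iff_gcd]
  exact v.irreducible.gcd_eq_one_iff.2 h

lemma exists_eq_mul_pow_of_dvd {v : HeightOneSpectrum R} {M d : Ideal R} {γ : ℕ}
    (h : d ∣ M * v.asIdeal ^ γ) : ∃ m j, m ∣ M ∧ j ≤ γ ∧ d = m * v.asIdeal ^ j := by
  obtain ⟨m, n, hm, hn, rfl⟩ := exists_dvd_and_dvd_of_dvd_mul h
  obtain ⟨j, hj, hnj⟩ := (dvd_prime_pow v.prime γ).1 hn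
  exact ⟨m, j, hm, hj, by rw [associated_iff_eq.1 hnj]⟩

lemma divisors_mul_pow_subset {M : Ideal R} (hM : M ≠ ⊥) (v : HeightOneSpectrum R) (γ : ℕ) :
    divisors (M * v.asIdeal ^ γ) ⊆
      (divisors M ×ˢ Finset.range (γ + 1)).image fun x => x.1 * v.asIdeal ^ x.2 := by
  intro d hd
  obtain ⟨m, j, hm, hj, rfl⟩ := exists_eq_mul_pow_of_dvd (dvd_of_mem_divisors hd)
  rw [Finset.mem_image]
  refine ⟨(m, j), ?_, rfl⟩
  rw [Finset.mem_product, mem_divisors hM, Finset.mem_range]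
  exact ⟨hm, Nat.lt_succ_of_le hj⟩

lemma sum_divisors_mul_pow_le {f : Ideal R → ℝ} (hf : ∀ I, 0 ≤ f I) {M : Ideal R} (hM : M ≠ ⊥)
    (v : HeightOneSpectrum R) (γ : ℕ) :
    ∑ d ∈ divisors (M * v.asIdeal ^ γ), f d
      ≤ ∑ m ∈ divisors M, ∑ j ∈ Finset.range (γ + 1), f (m * v.asIdeal ^ j) := by
  rw [← Finset.sum_product']
  exact (Finset.sum_le_sum_of_subset_of_nonneg (divisors_mul_pow_subset hM v γ)
    fun d _ _ => hf d).trans (Finset.sum_image_le_of_nonneg fun d _ => hf d)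

lemma not_dvd_prod_pow {T : Finset (HeightOneSpectrum R)} {v : HeightOneSpectrum R} (hv : v ∉ T)
    (e : HeightOneSpectrum R → ℕ) : ¬ v.asIdeal ∣ ∏ w ∈ T, w.asIdeal ^ e w := by
  intro h
  obtain ⟨w, hw, hvw⟩ := (Prime.dvd_finsetProd_iff v.prime _).1 h
  have := associated_iff_eq.1 (v.prime.associated_of_dvd w.prime (v.prime.dvd_of_dvd_pow hvw))
  exact hv (HeightOneSpectrum.ext this ▸ hw)

lemma prod_pow_ne_bot (T : Finset (HeightOneSpectrum R)) (e : HeightOneSpectrum R → ℕ) :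
    ∏ w ∈ T, w.asIdeal ^ e w ≠ ⊥ :=
  Finset.prod_ne_zero_iff.2 fun w _ => pow_ne_zero _ w.ne_bot

variable [Module.Free ℤ R]

/-- The bound `2 ^ ω(I) / N I`, where `ω` counts distinct prime factors, for the probability of a
residue class modulo `I` after one distortion at each prime. -/
noncomputable def distortedDensity (I : Ideal R) : ℝ :=
  2 ^ (UniqueFactorizationMonoid.primeFactors I).card / absNorm I

lemma distortedDensity_nonneg (I : Ideal R) : 0 ≤ distortedDensity I := by
  unfold distortedDensity
  positivity

lemma distortedDensity_one : distortedDensity (1 : Ideal R) = 1 := by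
  rw [distortedDensity, UniqueFactorizationMonoid.primeFactors_one, map_one, Finset.card_empty,
    pow_zero, Nat.cast_one, div_one]

lemma distortedDensity_mul [Module.Finite ℤ R] {I J : Ideal R} (h : IsCoprime I J) :
    distortedDensity (I * J) = distortedDensity I * distortedDensity J := by
  simp only [distortedDensity, UniqueFactorizationMonoid.primeFactors_mul_eq_disjUnion h.isRelPrime,
    Finset.card_disjUnion, pow_add, map_mul, Nat.cast_mul, div_mul_div_comm]

lemma distortedDensity_pow [Module.Finite ℤ R] (v : HeightOneSpectrum R) {j : ℕ} (hj : j ≠ 0) :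
    distortedDensity (v.asIdeal ^ j) = 2 / (absNorm v.asIdeal : ℝ) ^ j := by
  rw [distortedDensity, UniqueFactorizationMonoid.primeFactors_pow _ hj,
    UniqueFactorizationMonoid.primeFactors,
    UniqueFactorizationMonoid.normalizedFactors_irreducible v.irreducible]
  simp

lemma two_le_absNorm [Module.Finite ℤ R] (v : HeightOneSpectrum R) :
    (2 : ℝ) ≤ absNorm v.asIdeal :=
  mod_cast one_lt_absNorm v

lemma sum_sum_distortedDensity_pow_max_le [Module.Finite ℤ R] (v : HeightOneSpectrum R) (γ : ℕ) :
    ∑ i ∈ Finset.range (γ + 1), ∑ j ∈ Finset.range (γ + 1), distortedDensity (v.asIdeal ^ max i j)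
      ≤ 1 + 20 / absNorm v.asIdeal := by
  have hq := two_le_absNorm v
  have hterm : ∀ k : ℕ, (2 * ((k + 1 : ℕ) : ℝ) + 1) * distortedDensity (v.asIdeal ^ (k + 1))
      = (2 * k + 3) / (absNorm v.asIdeal : ℝ) ^ k * (2 / absNorm v.asIdeal) := fun k => by
    rw [distortedDensity_pow v k.succ_ne_zero, pow_succ, div_mul_div_comm, mul_div_assoc']
    push_cast
    ring
  calc _ = ∑ k ∈ Finset.range γ,
          (2 * k + 3) / (absNorm v.asIdeal : ℝ) ^ k * (2 / absNorm v.asIdeal) + 1 := by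
        rw [sum_range_sum_range_max fun k => distortedDensity (v.asIdeal ^ k),
          Finset.sum_range_succ', Finset.sum_congr rfl fun k _ => hterm k, pow_zero,
          distortedDensity_one]
        simp
    _ ≤ ∑ k ∈ Finset.range γ, (2 * k + 3 : ℝ) / 2 ^ k * (2 / absNorm v.asIdeal) + 1 := by
        gcongr
    _ ≤ 10 * (2 / absNorm v.asIdeal) + 1 := by
        rw [← Finset.sum_mul]
        gcongr
        exact sum_range_linear_div_two_pow_le γ
    _ = _ := by ring

/-- The second moment sum `∑ δ(lcm(m, n))` over pairs of divisors of `M`, where `δ` is the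
distorted density. -/
noncomputable def lcmSum (M : Ideal R) : ℝ :=
  ∑ m ∈ divisors M, ∑ n ∈ divisors M, distortedDensity (m ⊓ n)

lemma lcmSum_nonneg (M : Ideal R) : 0 ≤ lcmSum M :=
  Finset.sum_nonneg fun _ _ => Finset.sum_nonneg fun _ _ => distortedDensity_nonneg _

lemma lcmSum_one : lcmSum (1 : Ideal R) = 1 := by
  rw [lcmSum, divisors_one, Finset.sum_singleton, Finset.sum_singleton, inf_idem,
    distortedDensity_one]

variable [Module.Finite ℤ R]

lemma distortedDensity_mul_pow_inf_mul_pow {v : HeightOneSpectrum R} {M m n : Ideal R}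
    (hv : ¬ v.asIdeal ∣ M) (hm : m ∣ M) (hn : n ∣ M) (i j : ℕ) :
    distortedDensity (m * v.asIdeal ^ i ⊓ n * v.asIdeal ^ j)
      = distortedDensity (m ⊓ n) * distortedDensity (v.asIdeal ^ max i j) := by
  have hcop : ∀ {d : Ideal R} {k : ℕ}, d ∣ M → IsCoprime d (v.asIdeal ^ k) := fun hd =>
    isCoprime_pow_of_not_dvd (fun h => hv (h.trans hd)) _
  have hmn : m ⊓ n ∣ M := dvd_iff_le.2 (le_inf (le_of_dvd hm) (le_of_dvd hn))
  rw [mul_pow_inf_mul_pow (hcop hm) (hcop hn) (hcop hmn), distortedDensity_mul (hcop hmn)]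

lemma lcmSum_mul_pow_le {v : HeightOneSpectrum R} {M : Ideal R} (hM : M ≠ ⊥)
    (hv : ¬ v.asIdeal ∣ M) (γ : ℕ) :
    lcmSum (M * v.asIdeal ^ γ) ≤ lcmSum M * (1 + 20 / absNorm v.asIdeal) :=
  calc lcmSum (M * v.asIdeal ^ γ)
      ≤ ∑ m ∈ divisors M, ∑ i ∈ Finset.range (γ + 1), ∑ n ∈ divisors M,
          ∑ j ∈ Finset.range (γ + 1), distortedDensity (m * v.asIdeal ^ i ⊓ n * v.asIdeal ^ j) :=
        (sum_divisors_mul_pow_le (fun _ => Finset.sum_nonneg fun _ _ => distortedDensity_nonneg _)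
          hM v γ).trans (Finset.sum_le_sum fun _ _ => Finset.sum_le_sum fun _ _ =>
            sum_divisors_mul_pow_le (fun _ => distortedDensity_nonneg _) hM v γ)
    _ = ∑ m ∈ divisors M, ∑ n ∈ divisors M, ∑ i ∈ Finset.range (γ + 1),
          ∑ j ∈ Finset.range (γ + 1),
            distortedDensity (m ⊓ n) * distortedDensity (v.asIdeal ^ max i j) := by
        refine Finset.sum_congr rfl fun m hm => Finset.sum_comm.trans ?_
        exact Finset.sum_congr rfl fun n hn => Finset.sum_congr rfl fun i _ =>
          Finset.sum_congr rfl fun j _ => distortedDensity_mul_pow_inf_mul_pow hv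
            (dvd_of_mem_divisors hm) (dvd_of_mem_divisors hn) i j
    _ = lcmSum M * ∑ i ∈ Finset.range (γ + 1), ∑ j ∈ Finset.range (γ + 1),
          distortedDensity (v.asIdeal ^ max i j) := by
        simp only [lcmSum, Finset.sum_mul]
        simp only [Finset.mul_sum]
    _ ≤ lcmSum M * (1 + 20 / absNorm v.asIdeal) :=
        mul_le_mul_of_nonneg_left (sum_sum_distortedDensity_pow_max_le v γ) (lcmSum_nonneg M)

lemma lcmSum_prod_pow_le (T : Finset (HeightOneSpectrum R)) (e : HeightOneSpectrum R → ℕ) :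
    lcmSum (∏ v ∈ T, v.asIdeal ^ e v) ≤ ∏ v ∈ T, (1 + 20 / (absNorm v.asIdeal : ℝ)) := by
  induction T using Finset.induction_on with
  | empty => rw [Finset.prod_empty, Finset.prod_empty, lcmSum_one]
  | insert v T hv ih =>
    rw [Finset.prod_insert hv, Finset.prod_insert hv, mul_comm, mul_comm (1 + _ : ℝ)]
    refine (lcmSum_mul_pow_le (prod_pow_ne_bot T e) (not_dvd_prod_pow hv e) _).trans ?_
    gcongr

lemma sum_distortedDensity_pow_mul_sqrt_le (v : HeightOneSpectrum R) (n : ℕ) :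
    ∑ j ∈ Finset.range n, distortedDensity (v.asIdeal ^ j) * √(absNorm (v.asIdeal ^ j)) ≤ 8 := by
  have hq := two_le_absNorm v
  have hsqrt : (√(absNorm v.asIdeal))⁻¹ ≤ 3 / 4 := by
    rw [inv_le_comm₀ (by positivity) (by norm_num)]
    exact Real.le_sqrt_of_sq_le (by linarith)
  have hpow : ∀ j : ℕ, √((absNorm v.asIdeal : ℝ) ^ j) = √(absNorm v.asIdeal) ^ j := fun j => by
    rw [Real.sqrt_eq_iff_mul_self_eq (by positivity) (by positivity), ← mul_pow,
      Real.mul_self_sqrt (by positivity)]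
  have hterm : ∀ j : ℕ, distortedDensity (v.asIdeal ^ j) * √(absNorm (v.asIdeal ^ j))
      ≤ 2 * (3 / 4 : ℝ) ^ j := fun j => by
    rcases eq_or_ne j 0 with rfl | hj
    · simp [-one_eq_top, distortedDensity_one]
    · rw [distortedDensity_pow v hj, map_pow, Nat.cast_pow, div_mul_eq_mul_div, mul_div_assoc,
        Real.sqrt_div_self, hpow, ← inv_pow]
      gcongr
  calc _ ≤ ∑ j ∈ Finset.range n, 2 * (3 / 4 : ℝ) ^ j := Finset.sum_le_sum fun j _ => hterm j
    _ = 8 * (1 - (3 / 4) ^ n) := by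
        rw [← Finset.mul_sum, geom_sum_eq (by norm_num)]
        ring
    _ ≤ 8 := by linarith [pow_pos (show (0 : ℝ) < 3 / 4 by norm_num) n]

lemma sum_divisors_prod_pow_mul_sqrt_le (T : Finset (HeightOneSpectrum R))
    (e : HeightOneSpectrum R → ℕ) :
    ∑ m ∈ divisors (∏ v ∈ T, v.asIdeal ^ e v), distortedDensity m * √(absNorm m)
      ≤ 8 ^ T.card := by
  induction T using Finset.induction_on with
  | empty => simp [divisors_one, -one_eq_top, distortedDensity_one]
  | insert v T hv ih =>
    have hnonneg : ∀ m : Ideal R, 0 ≤ distortedDensity m * √(absNorm m) := fun m =>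
      mul_nonneg (distortedDensity_nonneg m) (Real.sqrt_nonneg _)
    have hmul : ∀ m ∈ divisors (∏ w ∈ T, w.asIdeal ^ e w), ∀ j : ℕ,
        distortedDensity (m * v.asIdeal ^ j) * √(absNorm (m * v.asIdeal ^ j))
          = (distortedDensity m * √(absNorm m))
            * (distortedDensity (v.asIdeal ^ j) * √(absNorm (v.asIdeal ^ j))) := fun m hm j => by
      rw [distortedDensity_mul (isCoprime_pow_of_not_dvd
          (fun h => not_dvd_prod_pow hv e (h.trans (dvd_of_mem_divisors hm))) j),
        map_mul, Nat.cast_mul, Real.sqrt_mul (Nat.cast_nonneg _)]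
      ring
    rw [Finset.prod_insert hv, mul_comm, Finset.card_insert_of_notMem hv, pow_succ]
    refine (sum_divisors_mul_pow_le hnonneg (prod_pow_ne_bot T e) v (e v)).trans ?_
    rw [Finset.sum_congr rfl fun m hm => Finset.sum_congr rfl fun j _ => hmul m hm j,
      ← Finset.sum_mul_sum]
    gcongr
    · exact Finset.sum_nonneg fun _ _ => hnonneg _
    · exact sum_distortedDensity_pow_mul_sqrt_le v _

end DivisorSums

/-! ### Distorted distributions -/

section Distortion

variable {R : Type*} [CommRing R]

/-- `A` is a union of residue classes modulo `M`. -/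
def IsPeriodic (M : Ideal R) (A : Set R) : Prop := ∀ x ∈ A, residueClass x M ⊆ A

lemma isPeriodic_residueClass {M I : Ideal R} (h : M ≤ I) (c : R) :
    IsPeriodic M (residueClass c I) := fun x hx y hy => by
  simpa only [mem_residueClass, sub_add_sub_cancel] using I.add_mem (h hy) hx

lemma prob_le_prob_inter_residueClass {κ : (R → ℝ) →ₚ[ℝ] ℝ} {x : R} {M : Ideal R}
    (h : prob κ (residueClass x M)ᶜ = 0) (A : Set R) :
    prob κ A ≤ prob κ (A ∩ residueClass x M) :=
  calc prob κ A ≤ prob κ (A ∩ residueClass x M ∪ (residueClass x M)ᶜ) :=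
        prob_mono κ fun y hy => by by_cases y ∈ residueClass x M <;> simp [*]
    _ ≤ prob κ (A ∩ residueClass x M) := (prob_union_le κ _ _).trans_eq (by rw [h, add_zero])

lemma prob_mixture_le_of_isPeriodic (E : (R → ℝ) →ₚ[ℝ] ℝ) {κ : R → (R → ℝ) →ₚ[ℝ] ℝ}
    {M : Ideal R} (hκ : ∀ x, prob (κ x) (residueClass x M)ᶜ = 0) {A B : Set R} (hAB : A ⊆ B)
    (hB : IsPeriodic M B) {t : ℝ} (ht : ∀ x, prob (κ x) A ≤ t) :
    prob (mixture E κ) A ≤ t * prob E B := by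
  rw [prob, prob, mixture_apply, ← smul_eq_mul, ← map_smul]
  refine OrderHomClass.mono E fun x => ?_
  change prob (κ x) A ≤ (t • B.indicator 1) x
  by_cases hx : x ∈ B
  · simpa [hx] using ht x
  · have hempty : A ∩ residueClass x M = ∅ := Set.eq_empty_of_forall_notMem fun y hy =>
      hx (hB y (hAB hy.1) (mem_residueClass_comm.1 hy.2))
    simpa [hx, hempty, prob_empty] using prob_le_prob_inter_residueClass (hκ x) A

/-- The union of the classes `a d + d` over the divisors `d` of `M` which do not divide `M₀`. -/
def classesBetween (a : Ideal R → R) (M₀ M : Ideal R) : Set R :=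
  ⋃ d ∈ {d | d ∣ M ∧ ¬ d ∣ M₀}, residueClass (a d) d

lemma classesBetween_subset_union (a : Ideal R → R) (M₀ M M' : Ideal R) :
    classesBetween a M₀ M' ⊆ classesBetween a M₀ M ∪ classesBetween a M M' := fun x hx => by
  obtain ⟨d, ⟨hd, hd₀⟩, hxd⟩ := Set.mem_iUnion₂.1 hx
  by_cases hdM : d ∣ M
  · exact Or.inl (Set.mem_biUnion (t := fun d => residueClass (a d) d) ⟨hdM, hd₀⟩ hxd)
  · exact Or.inr (Set.mem_biUnion (t := fun d => residueClass (a d) d) ⟨hd, hdM⟩ hxd)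

lemma isPeriodic_classesBetween (a : Ideal R → R) (M₀ M : Ideal R) :
    IsPeriodic M (classesBetween a M₀ M) := fun x hx => by
  obtain ⟨d, hd, hxd⟩ := Set.mem_iUnion₂.1 hx
  exact (isPeriodic_residueClass (le_of_dvd hd.1) _ x hxd).trans
    (Set.subset_biUnion_of_mem (u := fun d => residueClass (a d) d) hd)

variable [IsDedekindDomain R] [Module.Free ℤ R]

/-- `E` is a probability distribution on residues modulo `M` whose masses of residue classes exceed
those of the uniform distribution by a factor of at most `2` per prime divisor of the modulus. -/
def IsDistorted (E : (R → ℝ) →ₚ[ℝ] ℝ) (M : Ideal R) : Prop :=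
  E 1 = 1 ∧ ∀ d, d ∣ M → ∀ c, prob E (residueClass c d) ≤ distortedDensity d

lemma IsDistorted.of_dvd {E : (R → ℝ) →ₚ[ℝ] ℝ} {M M' : Ideal R} (hE : IsDistorted E M)
    (h : M' ∣ M) : IsDistorted E M' := ⟨hE.1, fun d hd => hE.2 d (hd.trans h)⟩

lemma IsDistorted.prob_inter_le {E : (R → ℝ) →ₚ[ℝ] ℝ} {M m n : Ideal R} (hE : IsDistorted E M)
    (hm : m ∣ M) (hn : n ∣ M) (b c : R) :
    prob E (residueClass b m ∩ residueClass c n) ≤ distortedDensity (m ⊓ n) := by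
  rcases (residueClass b m ∩ residueClass c n).eq_empty_or_nonempty with h | ⟨z, hzb, hzc⟩
  · rw [h, prob_empty]
    exact distortedDensity_nonneg _
  · rw [← residueClass_eq_of_mem hzb, ← residueClass_eq_of_mem hzc, ← residueClass_inf]
    exact hE.2 _ (dvd_iff_le.2 (le_inf (le_of_dvd hm) (le_of_dvd hn))) z

lemma IsDistorted.apply_sq_sum_le {ι : Type*} {E : (R → ℝ) →ₚ[ℝ] ℝ} {M : Ideal R}
    (hE : IsDistorted E M) (s : Finset ι) (c : ι → R) {m : ι → Ideal R} (hm : ∀ i ∈ s, m i ∣ M)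
    {t : ι → ℝ} (ht : ∀ i, 0 ≤ t i) :
    E (fun x => (∑ i ∈ s with x ∈ residueClass (c i) (m i), t i) ^ 2)
      ≤ ∑ i ∈ s, ∑ k ∈ s, t i * t k * distortedDensity (m i ⊓ m k) := by
  have hexpand : (fun x => (∑ i ∈ s with x ∈ residueClass (c i) (m i), t i) ^ 2)
      = ∑ i ∈ s, ∑ k ∈ s, (t i * t k) •
          (residueClass (c i) (m i) ∩ residueClass (c k) (m k)).indicator (1 : R → ℝ) := by
    funext x
    simp only [Finset.sum_filter, sq, Finset.sum_mul_sum, Finset.sum_apply, Pi.smul_apply]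
    refine Finset.sum_congr rfl fun i _ => Finset.sum_congr rfl fun k _ => ?_
    by_cases hi : x ∈ residueClass (c i) (m i) <;>
      by_cases hk : x ∈ residueClass (c k) (m k) <;> simp [hi, hk]
  simp only [hexpand, map_sum, map_smul, smul_eq_mul]
  exact Finset.sum_le_sum fun i hi => Finset.sum_le_sum fun k hk =>
    mul_le_mul_of_nonneg_left (hE.prob_inter_le (hm i hi) (hm k hk) _ _)
      (mul_nonneg (ht i) (ht k))

variable [Module.Finite ℤ R]

lemma exists_fibre_distribution (a : Ideal R → R) {M : Ideal R} (hM : M ≠ ⊥)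
    {v : HeightOneSpectrum R} (hv : ¬ v.asIdeal ∣ M) (γ : ℕ) (x : R) :
    ∃ κ : (R → ℝ) →ₚ[ℝ] ℝ, κ 1 = 1 ∧ prob κ (residueClass x M)ᶜ = 0 ∧
      (∀ j ≤ γ, ∀ c, prob κ (residueClass c (v.asIdeal ^ j)) ≤ distortedDensity (v.asIdeal ^ j)) ∧
      prob κ (classesBetween a M (M * v.asIdeal ^ γ))
        ≤ (∑ i ∈ divisors M ×ˢ Finset.range γ with
            x ∈ residueClass (a (i.1 * v.asIdeal ^ (i.2 + 1))) i.1,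
            ((absNorm v.asIdeal : ℝ) ^ (i.2 + 1))⁻¹) ^ 2 := by
  have hMN := isCoprime_pow_of_not_dvd hv γ
  have := finiteQuotientOfFreeOfNeBot (v.asIdeal ^ γ) (pow_ne_zero γ v.ne_bot)
  have hcard : ∀ j, (Nat.card (R ⧸ v.asIdeal ^ j) : ℝ) = (absNorm v.asIdeal : ℝ) ^ j := fun j => by
    rw [← Nat.cast_pow, ← map_pow, absNorm_apply, Submodule.cardQuot_apply]
  obtain ⟨κ, hκ1, hκx, hκ, hnew⟩ := exists_avoiding_on_residueClass hMN x
    {i ∈ divisors M ×ˢ Finset.range γ | x ∈ residueClass (a (i.1 * v.asIdeal ^ (i.2 + 1))) i.1}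
    (fun i => a (i.1 * v.asIdeal ^ (i.2 + 1))) (J := fun i => v.asIdeal ^ (i.2 + 1))
    fun i hi => pow_le_pow_right
      (Finset.mem_range.1 (Finset.mem_product.1 (Finset.mem_filter.1 hi).1).2)
  simp only [hcard] at hκ hnew
  refine ⟨κ, hκ1, hκx, fun j hj c => ?_, ?_⟩
  · rcases eq_or_ne j 0 with rfl | hj0
    · rw [pow_zero, distortedDensity_one, ← hκ1, ← prob_univ]
      exact prob_mono κ (Set.subset_univ _)
    · rw [distortedDensity_pow v hj0, div_eq_mul_inv, ← hcard]
      exact hκ c _ (pow_le_pow_right hj)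
  · refine (prob_le_prob_inter_residueClass hκx _).trans ((prob_mono κ fun y hy => ?_).trans hnew)
    obtain ⟨hynew, hyx⟩ := hy
    obtain ⟨d, ⟨hd, hdM⟩, hyd⟩ := Set.mem_iUnion₂.1 hynew
    obtain ⟨m, k, hm, hk, rfl⟩ := exists_eq_mul_pow_of_dvd hd
    obtain ⟨j, rfl⟩ : ∃ j, k = j + 1 := Nat.exists_eq_succ_of_ne_zero fun h => hdM (by simpa [h])
    refine Set.mem_iUnion₂.2 ⟨(m, j), ?_, residueClass_mono _ Ideal.mul_le_right hyd⟩
    rw [Finset.mem_filter, Finset.mem_product, mem_divisors hM, Finset.mem_range]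
    exact ⟨⟨hm, hk⟩, isPeriodic_residueClass (le_of_dvd hm) _ y
      (residueClass_mono _ Ideal.mul_le_left hyd) (mem_residueClass_comm.1 hyx)⟩

lemma sum_sum_inv_pow_mul_distortedDensity_le (M : Ideal R) (v : HeightOneSpectrum R) (γ : ℕ) :
    ∑ i ∈ divisors M ×ˢ Finset.range γ, ∑ k ∈ divisors M ×ˢ Finset.range γ,
        ((absNorm v.asIdeal : ℝ) ^ (i.2 + 1))⁻¹ * ((absNorm v.asIdeal : ℝ) ^ (k.2 + 1))⁻¹
          * distortedDensity (i.1 ⊓ k.1)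
      ≤ (2 / absNorm v.asIdeal) ^ 2 * lcmSum M :=
  calc _ = (∑ j ∈ Finset.range γ, ((absNorm v.asIdeal : ℝ) ^ (j + 1))⁻¹) ^ 2 * lcmSum M := by
        rw [sq, Finset.sum_mul_sum]
        simp only [lcmSum, Finset.sum_product, Finset.mul_sum]
        refine Finset.sum_congr rfl fun m _ => Finset.sum_comm.trans ?_
        simp only [Finset.sum_mul]
    _ ≤ _ := by
        gcongr
        · exact lcmSum_nonneg M
        · exact sum_range_inv_pow_succ_le (two_le_absNorm v) γ

lemma IsDistorted.exists_mul_pow {E : (R → ℝ) →ₚ[ℝ] ℝ} {M : Ideal R} (hE : IsDistorted E M)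
    (a : Ideal R → R) (hM : M ≠ ⊥) {v : HeightOneSpectrum R} (hv : ¬ v.asIdeal ∣ M) (γ : ℕ) :
    ∃ E' : (R → ℝ) →ₚ[ℝ] ℝ, IsDistorted E' (M * v.asIdeal ^ γ) ∧
      (∀ A, IsPeriodic M A → prob E' A ≤ prob E A) ∧
      prob E' (classesBetween a M (M * v.asIdeal ^ γ))
        ≤ (2 / absNorm v.asIdeal) ^ 2 * lcmSum M := by
  choose κ hκ1 hκx hκ hnew using exists_fibre_distribution a hM hv γ
  refine ⟨mixture E κ, ⟨?_, fun d hd c => ?_⟩, fun A hA => ?_, ?_⟩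
  · rw [mixture_apply]
    exact (congrArg E (funext hκ1)).trans hE.1
  · obtain ⟨m, j, hm, hj, rfl⟩ := exists_eq_mul_pow_of_dvd hd
    have hmv : ¬ v.asIdeal ∣ m := fun h => hv (h.trans hm)
    calc prob (mixture E κ) (residueClass c (m * v.asIdeal ^ j))
        ≤ distortedDensity (v.asIdeal ^ j) * prob E (residueClass c m) :=
          prob_mixture_le_of_isPeriodic E hκx (residueClass_mono c Ideal.mul_le_left)
            (isPeriodic_residueClass (le_of_dvd hm) c) fun x =>
              (prob_mono _ (residueClass_mono c Ideal.mul_le_right)).trans (hκ x j hj c)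
      _ ≤ distortedDensity (v.asIdeal ^ j) * distortedDensity m :=
          mul_le_mul_of_nonneg_left (hE.2 m hm c) (distortedDensity_nonneg _)
      _ = distortedDensity (m * v.asIdeal ^ j) := by
          rw [distortedDensity_mul (isCoprime_pow_of_not_dvd hmv j), mul_comm]
  · simpa only [one_mul] using
      prob_mixture_le_of_isPeriodic E hκx subset_rfl hA fun x => prob_le_one (hκ1 x) A
  · calc prob (mixture E κ) (classesBetween a M (M * v.asIdeal ^ γ))
        ≤ E fun x => (∑ i ∈ divisors M ×ˢ Finset.range γ with
            x ∈ residueClass (a (i.1 * v.asIdeal ^ (i.2 + 1))) i.1,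
            ((absNorm v.asIdeal : ℝ) ^ (i.2 + 1))⁻¹) ^ 2 := OrderHomClass.mono E hnew
      _ ≤ _ := hE.apply_sq_sum_le (divisors M ×ˢ Finset.range γ) _ (m := Prod.fst)
          (t := fun i => ((absNorm v.asIdeal : ℝ) ^ (i.2 + 1))⁻¹)
          (fun i hi => dvd_of_mem_divisors (Finset.mem_product.1 hi).1) fun i => by positivity
      _ ≤ _ := sum_sum_inv_pow_mul_distortedDensity_le M v γ

end Distortion

/-! ### Covering systems -/

section Covering

variable {R : Type*} [CommRing R] [IsDedekindDomain R]

lemma exists_eq_prod_pow {J : Ideal R} (hJ : J ≠ ⊥) :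
    ∃ (T : Finset (HeightOneSpectrum R)) (e : HeightOneSpectrum R → ℕ),
      J = ∏ v ∈ T, v.asIdeal ^ e v := by
  refine ⟨(Ideal.hasFiniteMulSupport hJ).toFinset,
    fun v => (Associates.mk v.asIdeal).count (Associates.mk J).factors, ?_⟩
  exact (finprod_heightOneSpectrum_factorization hJ).symm.trans (finprod_eq_prod _ _)

variable [Module.Free ℤ R] [Module.Finite ℤ R]

lemma exists_isDistorted {M : Ideal R} (hM : M ≠ ⊥) :
    ∃ E : (R → ℝ) →ₚ[ℝ] ℝ, IsDistorted E M := by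
  have := finiteQuotientOfFreeOfNeBot M hM
  obtain ⟨U, hU1, -, hU⟩ := exists_uniform_on_residueClass (isCoprime_one_left (x := M)) 0
  refine ⟨U, hU1, fun d hd c => ?_⟩
  rw [hU c d (le_of_dvd hd), distortedDensity, absNorm_apply, Submodule.cardQuot_apply, ← one_div]
  gcongr
  exact one_le_pow₀ one_le_two

lemma exists_isDistorted_prob_classesBetween_le (a : Ideal R → R) (e : HeightOneSpectrum R → ℕ)
    {T₀ T : Finset (HeightOneSpectrum R)}
    (hT : ∀ v ∈ T, ∀ w ∈ T₀, absNorm w.asIdeal < absNorm v.asIdeal)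
    {B : HeightOneSpectrum R → ℝ}
    (hB : ∀ (v : HeightOneSpectrum R) (S : Finset (HeightOneSpectrum R)),
      (∀ w ∈ S, absNorm w.asIdeal ≤ absNorm v.asIdeal) →
        ∏ w ∈ S, (1 + 20 / (absNorm w.asIdeal : ℝ)) ≤ B v) :
    ∃ E : (R → ℝ) →ₚ[ℝ] ℝ, IsDistorted E (∏ v ∈ T₀ ∪ T, v.asIdeal ^ e v) ∧
      prob E (classesBetween a (∏ v ∈ T₀, v.asIdeal ^ e v) (∏ v ∈ T₀ ∪ T, v.asIdeal ^ e v))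
        ≤ ∑ v ∈ T, (2 / absNorm v.asIdeal) ^ 2 * B v := by
  induction T using Finset.induction_on_max_value
    (fun v : HeightOneSpectrum R => absNorm v.asIdeal) with
  | empty =>
    obtain ⟨E, hE⟩ := exists_isDistorted (prod_pow_ne_bot T₀ e)
    have hempty : ∀ M, classesBetween a M M = ∅ := fun M => by simp [classesBetween]
    exact ⟨E, by simpa using hE, by simp [hempty, prob_empty]⟩
  | insert v T hvT hmax ih =>
    obtain ⟨E, hE, hprob⟩ := ih fun w hw => hT w (Finset.mem_insert_of_mem hw)
    have hv₀ : v ∉ T₀ := fun h => (hT v (Finset.mem_insert_self v T) v h).false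
    have hv : v ∉ T₀ ∪ T := by simp [hv₀, hvT]
    obtain ⟨E', hE', hperiodic, hnew⟩ :=
      hE.exists_mul_pow a (prod_pow_ne_bot _ e) (not_dvd_prod_pow hv e) (e v)
    have hlcm : lcmSum (∏ w ∈ T₀ ∪ T, w.asIdeal ^ e w) ≤ B v :=
      (lcmSum_prod_pow_le _ e).trans <| hB v _ fun w hw => (Finset.mem_union.1 hw).elim
        (fun h => (hT v (Finset.mem_insert_self v T) w h).le) (hmax w)
    rw [Finset.union_insert, Finset.prod_insert hv, mul_comm, Finset.sum_insert hvT, add_comm]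
    refine ⟨E', hE', ?_⟩
    calc _ ≤ _ := prob_mono E' (classesBetween_subset_union a _ (∏ w ∈ T₀ ∪ T, w.asIdeal ^ e w) _)
      _ ≤ _ := prob_union_le E' _ _
      _ ≤ _ := add_le_add ((hperiodic _ (isPeriodic_classesBetween a _ _)).trans hprob)
        (hnew.trans (mul_le_mul_of_nonneg_left hlcm (sq_nonneg _)))

lemma exists_bound_forall_prob_classesBetween_le {ε : ℝ} (hε : 0 < ε) :
    ∃ Y : ℕ, ∀ (a : Ideal R → R) (e : HeightOneSpectrum R → ℕ) (T : Finset (HeightOneSpectrum R)),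
      ∃ E : (R → ℝ) →ₚ[ℝ] ℝ, IsDistorted E (∏ v ∈ T, v.asIdeal ^ e v) ∧
        prob E (classesBetween a (∏ v ∈ T with absNorm v.asIdeal ≤ Y, v.asIdeal ^ e v)
          (∏ v ∈ T, v.asIdeal ^ e v)) ≤ ε := by
  obtain ⟨C, hC, hprod⟩ := exists_prod_one_add_div_absNorm_le (R := R) (c := 20) (ε := 1 / 2)
    (by norm_num) (by norm_num)
  obtain ⟨Y, hY⟩ := exists_sum_absNorm_rpow_inv_le (R := R) (s := 3 / 2) (c := ε / (4 * C))
    (by norm_num) (by positivity)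
  refine ⟨Y, fun a e T => ?_⟩
  obtain ⟨E, hE, hprob⟩ := exists_isDistorted_prob_classesBetween_le a e
    (T₀ := {v ∈ T | absNorm v.asIdeal ≤ Y}) (T := {v ∈ T | ¬ absNorm v.asIdeal ≤ Y})
    (fun v hv w hw => (Finset.mem_filter.1 hw).2.trans_lt (not_le.1 (Finset.mem_filter.1 hv).2))
    fun v S hS => hprod S _ (one_lt_absNorm v).pos hS
  rw [Finset.filter_union_filter_not_eq] at hE hprob
  have hpow : ∀ v : HeightOneSpectrum R,
      (2 / (absNorm v.asIdeal : ℝ)) ^ 2 * (C * (absNorm v.asIdeal : ℝ) ^ (1 / 2 : ℝ))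
        = 4 * C * ((absNorm v.asIdeal : ℝ) ^ (3 / 2 : ℝ))⁻¹ := fun v => by
    have hpos : (0 : ℝ) < absNorm v.asIdeal := mod_cast (one_lt_absNorm v).pos
    rw [show (1 / 2 : ℝ) = 2 - 3 / 2 by norm_num, Real.rpow_sub hpos, Real.rpow_two]
    field_simp
    norm_num
  refine ⟨E, hE, hprob.trans ?_⟩
  simp only [hpow, ← Finset.mul_sum]
  calc _ ≤ 4 * C * (ε / (4 * C)) := by
        gcongr
        exact hY _ fun v hv => not_le.1 (Finset.mem_filter.1 hv).2
    _ = ε := mul_div_cancel₀ _ (by positivity)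

lemma exists_bound_forall_prob_residueClass_le (Y : ℕ) {ε : ℝ} (hε : 0 < ε) :
    ∃ C : ℝ, ∀ (a : Ideal R → R) (e : HeightOneSpectrum R → ℕ) (T : Finset (HeightOneSpectrum R)),
      (∀ v ∈ T, absNorm v.asIdeal ≤ Y) →
      ∀ E : (R → ℝ) →ₚ[ℝ] ℝ, IsDistorted E (∏ v ∈ T, v.asIdeal ^ e v) →
        prob E (⋃ d ∈ {d ∈ divisors (∏ v ∈ T, v.asIdeal ^ e v) | C < absNorm d},
          residueClass (a d) d) ≤ ε := by
  set b := (8 : ℝ) ^ (Module.finrank ℤ R * Nat.primeCounting Y)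
  refine ⟨(b / ε) ^ 2, fun a e T hT E hE => ?_⟩
  have hb : 0 < b := by positivity
  have hlarge : ∀ d : Ideal R, (b / ε) ^ 2 < absNorm d →
      distortedDensity d ≤ distortedDensity d * √(absNorm d) * (ε / b) := fun d hd => by
    have hsqrt : b / ε ≤ √(absNorm d) := Real.le_sqrt_of_sq_le hd.le
    rw [mul_assoc]
    refine le_mul_of_one_le_right (distortedDensity_nonneg d) ?_
    rwa [← inv_div b ε, ← div_eq_mul_inv, one_le_div₀ (by positivity)]
  calc _ ≤ ∑ d ∈ divisors (∏ v ∈ T, v.asIdeal ^ e v) with (b / ε) ^ 2 < absNorm d,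
          prob E (residueClass (a d) d) := prob_biUnion_le E _ _
    _ ≤ ∑ d ∈ divisors (∏ v ∈ T, v.asIdeal ^ e v) with (b / ε) ^ 2 < absNorm d,
          distortedDensity d * √(absNorm d) * (ε / b) := Finset.sum_le_sum fun d hd =>
        (hE.2 d (dvd_of_mem_divisors (Finset.mem_filter.1 hd).1) _).trans
          (hlarge d (Finset.mem_filter.1 hd).2)
    _ ≤ ∑ d ∈ divisors (∏ v ∈ T, v.asIdeal ^ e v),
          distortedDensity d * √(absNorm d) * (ε / b) :=
        Finset.sum_le_sum_of_subset_of_nonneg (Finset.filter_subset _ _) fun d _ _ =>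
          mul_nonneg (mul_nonneg (distortedDensity_nonneg d) (Real.sqrt_nonneg _)) (by positivity)
    _ ≤ b * (ε / b) := by
        rw [← Finset.sum_mul]
        gcongr
        exact (sum_divisors_prod_pow_mul_sqrt_le T e).trans
          (pow_le_pow_right₀ (by norm_num) (card_le_finrank_mul_primeCounting hT))
    _ = ε := mul_div_cancel₀ _ hb.ne'

lemma exists_absNorm_le_of_forall_exists_mem_residueClass :
    ∃ C : ℝ, ∀ (A : Finset (Ideal R)) (a : Ideal R → R), (∀ I ∈ A, I ≠ ⊥) →
      (∀ x, ∃ I ∈ A, x ∈ residueClass (a I) I) → ∃ I ∈ A, (absNorm I : ℝ) ≤ C := by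
  obtain ⟨Y, hY⟩ := exists_bound_forall_prob_classesBetween_le (R := R) (ε := 1 / 4) (by norm_num)
  obtain ⟨C, hC⟩ := exists_bound_forall_prob_residueClass_le (R := R) Y (ε := 1 / 4) (by norm_num)
  refine ⟨C, fun A a hA hcover => ?_⟩
  by_contra! hlarge
  obtain ⟨T, e, hT⟩ := exists_eq_prod_pow (Finset.prod_ne_zero_iff.2 hA)
  obtain ⟨E, hE, hrough⟩ := hY a e T
  have hdvd : ∏ v ∈ T with absNorm v.asIdeal ≤ Y, v.asIdeal ^ e v ∣ ∏ v ∈ T, v.asIdeal ^ e v :=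
    Finset.prod_dvd_prod_of_subset _ _ _ (Finset.filter_subset _ _)
  have hsmooth := hC a e _ (fun v hv => (Finset.mem_filter.1 hv).2) E (hE.of_dvd hdvd)
  have hhalf : prob E Set.univ ≤ 1 / 4 + 1 / 4 := by
    refine (prob_mono E fun x _ => ?_).trans
      ((prob_union_le E _ _).trans (add_le_add hrough hsmooth))
    obtain ⟨I, hI, hx⟩ := hcover x
    by_cases hI₀ : I ∣ ∏ v ∈ T with absNorm v.asIdeal ≤ Y, v.asIdeal ^ e v
    · refine Or.inr (Set.mem_iUnion₂.2 ⟨I, ?_, hx⟩)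
      rw [Finset.mem_filter, mem_divisors (prod_pow_ne_bot _ e)]
      exact ⟨hI₀, hlarge I hI⟩
    · exact Or.inl (Set.mem_iUnion₂.2 ⟨I, ⟨hT ▸ Finset.dvd_prod_of_mem _ hI, hI₀⟩, hx⟩)
  rw [prob_univ, hE.1] at hhalf
  norm_num at hhalf

theorem minimum_modulus_number_field_distinct_general :
    ∃ C : ℝ, ∀ {ι : Type*} [Finite ι] (a : ι → R) (I : ι → Ideal R), (∀ i, I i ≠ ⊥) →
      Function.Injective I → (∀ x, ∃ i, x - a i ∈ I i) → ∃ i, (absNorm (I i) : ℝ) ≤ C := by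
  obtain ⟨C, hC⟩ := exists_absNorm_le_of_forall_exists_mem_residueClass (R := R)
  refine ⟨C, fun {ι} _ a I hI hinj hcover => ?_⟩
  have := Fintype.ofFinite ι
  obtain ⟨J, hJ, hJC⟩ := hC (Finset.univ.image I) (Function.extend I a 0)
    (Finset.forall_mem_image.2 fun i _ => hI i) fun x => by
      obtain ⟨i, hi⟩ := hcover x
      refine ⟨I i, Finset.mem_image_of_mem I (Finset.mem_univ i), ?_⟩
      rwa [hinj.extend_apply, mem_residueClass]
  obtain ⟨i, -, rfl⟩ := Finset.mem_image.1 hJ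
  exact ⟨i, hJC⟩

end Covering

/-- A covering system with pairwise distinct distinguishable moduli has a modulus of norm at
most a constant depending only on `K`. -/
theorem minimum_modulus_number_field_distinct (K : Type*) [Field K] [NumberField K] :
    ∃ C : ℝ,
      ∀ (n : ℕ) (hn : 0 < n) (a : Fin n → 𝓞 K) (Idl : Fin n → Ideal (𝓞 K)),
        (∀ i : Fin n, Distinguishable (Idl i)) →
        Function.Injective Idl →
        (∀ x : 𝓞 K, ∃ i : Fin n, x - a i ∈ Idl i) →
        ∃ i : Fin n, (Ideal.absNorm (Idl i) : ℝ) ≤ C := by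
  obtain ⟨C, hC⟩ := minimum_modulus_number_field_distinct_general (R := 𝓞 K)
  exact ⟨C, fun n _ a I hdist => hC a I fun i => (hdist i).1⟩
end

section
/- Assume the general distortion setup. Suppose in addition that B_j is π_j-measurable for every 1 ≤ j ≤ J, and that Σ_{j=1}^J min{ M_j^{(1)}, M_j^{(2)}/(4δ_j(1−δ_j)) } < 1, where for indices j with δ_j = 0 the second term in the minimum is interpreted as +∞ (so the minimum equals M_j^{(1)}). Then P_J(B_1 ∪ ⋯ ∪ B_J) < 1. -/
open scoped Classical

/-!
Let `α` be the density of `B` in the fibres of `ρ` and put `m = min α δ`. Both cases of the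
recursion say the same thing: on each fibre, delete the proportion `m` of its mass, all of it from
`B`, and divide by `1 - m`. Hence a distortion step only moves mass within fibres, so the integral
of every function constant on the fibres is preserved; in particular the mass of `B j`, which is
`π j`-measurable, no longer changes after step `j`. The step itself leaves on `B` the mass
`E_p[(α - m) / (1 - m)]`, and pointwise `(α - m) / (1 - m) ≤ min {α, α² / (4δ(1 - δ))}`. The union
bound concludes.
-/

section UnionBound

open Finset

variable {ι S M : Type*} [AddCommMonoid M] [PartialOrder M] [IsOrderedAddMonoid M] {f : S → M}

lemma sum_union_le_sum_add_sum (hf : 0 ≤ f) (s t : Finset S) :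
    ∑ x ∈ s ∪ t, f x ≤ ∑ x ∈ s, f x + ∑ x ∈ t, f x := by
  rw [← sum_union_inter]
  exact le_add_of_nonneg_right (sum_nonneg fun x _ => hf x)

lemma sum_biUnion_le_sum_sum (hf : 0 ≤ f) (s : Finset ι) (B : ι → Finset S) :
    ∑ x ∈ s.biUnion B, f x ≤ ∑ i ∈ s, ∑ x ∈ B i, f x := by
  rw [← sup_eq_biUnion]
  exact apply_sup_le_sum (f := fun t : Finset S => ∑ x ∈ t, f x) sum_empty
    (sum_union_le_sum_add_sum hf _ _) s

end UnionBound

section TruncatedDensity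

variable {a δ : ℝ}

lemma one_sub_min_pos (hδ : δ < 1) : 0 < 1 - min a δ :=
  sub_pos.2 ((min_le_right a δ).trans_lt hδ)

lemma mul_min_div_self (ha : 0 ≤ a) (hδ : 0 ≤ δ) : a * (min a δ / a) = min a δ := by
  rcases ha.eq_or_lt with rfl | ha
  · rw [zero_mul, min_eq_left hδ]
  · exact mul_div_cancel₀ _ ha.ne'

lemma sub_min_div_one_sub_min_le (ha₀ : 0 ≤ a) (ha₁ : a ≤ 1) (hδ : δ ∈ Set.Ico 0 1) :
    (a - min a δ) / (1 - min a δ) ≤ a := by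
  rw [div_le_iff₀ (one_sub_min_pos hδ.2)]
  linarith [mul_le_of_le_one_left (le_min ha₀ hδ.1) ha₁]

lemma sub_min_div_one_sub_min_le_sq_div (hδ : δ ∈ Set.Ioo 0 1) :
    (a - min a δ) / (1 - min a δ) ≤ a ^ 2 / (4 * δ * (1 - δ)) := by
  have hδ' : 0 < 1 - δ := sub_pos.2 hδ.2
  have hδ₀ : 0 < δ := hδ.1
  rcases le_total a δ with h | h
  · rw [min_eq_left h, sub_self, zero_div]
    positivity
  · rw [min_eq_right h, ← div_div]
    gcongr
    rw [le_div_iff₀ (by positivity)]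
    linarith [sq_nonneg (a - 2 * δ)]

end TruncatedDensity

section FiberDensity

open Finset

variable {S T : Type*} [Fintype S] {ρ : S → T} {B : Finset S}

/-- The density `α` of `B` in the fibre of `ρ` through `x`. -/
noncomputable def fiberDensity (ρ : S → T) (B : Finset S) (x : S) : ℝ :=
  #{y ∈ B | ρ y = ρ x} / #{y | ρ y = ρ x}

lemma fiberDensity_nonneg (x : S) : 0 ≤ fiberDensity ρ B x := by
  unfold fiberDensity
  positivity

lemma fiberDensity_le_one (x : S) : fiberDensity ρ B x ≤ 1 :=
  div_le_one_of_le₀ (mod_cast card_le_card (filter_subset_filter _ (subset_univ B)))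
    (Nat.cast_nonneg _)

lemma card_fiber_pos (ρ : S → T) (x : S) : (0 : ℝ) < #{y | ρ y = ρ x} :=
  Nat.cast_pos.2 (card_pos.2 ⟨x, by simp⟩)

lemma fiberDensity_pos_of_mem {x : S} (hx : x ∈ B) : 0 < fiberDensity ρ B x :=
  div_pos (Nat.cast_pos.2 (card_pos.2 ⟨x, by simp [hx]⟩)) (card_fiber_pos ρ x)

lemma factorsThrough_fiberDensity : (fiberDensity ρ B).FactorsThrough ρ := fun x y h => by
  simp only [fiberDensity, h]

lemma sum_fiberDensity_mul {f : S → ℝ} (hf : f.FactorsThrough ρ) :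
    ∑ x, fiberDensity ρ B x * f x = ∑ x ∈ B, f x :=
  calc ∑ x, fiberDensity ρ B x * f x
      = ∑ x, ∑ y ∈ B with ρ y = ρ x, f x / #{z | ρ z = ρ x} := by
        simp only [fiberDensity, sum_const, nsmul_eq_mul, div_mul_eq_mul_div, mul_div_assoc]
    _ = ∑ x, ∑ y ∈ B with ρ y = ρ x, f y / #{z | ρ z = ρ y} :=
        sum_congr rfl fun x _ => sum_congr rfl fun y hy => by
          have hyx : ρ y = ρ x := (mem_filter.1 hy).2
          rw [hf hyx, hyx]
    _ = ∑ y ∈ B, ∑ x with ρ x = ρ y, f y / #{z | ρ z = ρ y} :=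
        sum_comm' fun x y => by simp [eq_comm, and_comm]
    _ = ∑ y ∈ B, f y := sum_congr rfl fun y _ => by
        rw [sum_const, nsmul_eq_mul, mul_div_cancel₀ _ (card_fiber_pos ρ y).ne']

end FiberDensity

section Distort

open Finset Function

variable {S T : Type*} [Fintype S] {ρ : S → T} {B : Finset S} {δ : ℝ} {p : S → ℝ}

/-- One distortion step applied to the weight `p`. With `α` the fibre density of `B` and
`m = min α δ`, the weight is multiplied by `(1 - m / α) / (1 - m)` on `B`, where `α > 0`, and by
`1 / (1 - m)` off `B`; `distort_apply` recovers the formula split at `α < δ`. -/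
noncomputable def distort (ρ : S → T) (B : Finset S) (δ : ℝ) (p : S → ℝ) (x : S) : ℝ :=
  (1 - if x ∈ B then min (fiberDensity ρ B x) δ / fiberDensity ρ B x else 0) *
    (p x / (1 - min (fiberDensity ρ B x) δ))

/-- The bound `min {M⁽¹⁾, M⁽²⁾ / (4δ(1 - δ))}` on the mass of `B` after a distortion step, where
`M⁽¹⁾` and `M⁽²⁾` are the moments of the fibre density of `B` under `p`. At `δ = 0`, where division
would give the second term the junk value `0`, that term is taken to be infinite. -/
noncomputable def momentBound (ρ : S → T) (B : Finset S) (δ : ℝ) (p : S → ℝ) : ℝ :=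
  if δ = 0 then ∑ x, fiberDensity ρ B x * p x
  else min (∑ x, fiberDensity ρ B x * p x)
    ((∑ x, fiberDensity ρ B x ^ 2 * p x) / (4 * δ * (1 - δ)))

lemma distort_apply (hδ : δ ∈ Set.Ico 0 1) (x : S) :
    distort ρ B δ p x =
      if fiberDensity ρ B x < δ then (if x ∈ B then 0 else p x / (1 - fiberDensity ρ B x))
      else if fiberDensity ρ B x = 0 then p x
      else p x * (fiberDensity ρ B x - (if x ∈ B then δ else 0)) /
        (fiberDensity ρ B x * (1 - δ)) := by
  have hδ' : 1 - δ ≠ 0 := (sub_pos.2 hδ.2).ne'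
  unfold distort
  split_ifs with hx hlt h₀ hlt h₀
  · rw [min_eq_left hlt.le, div_self (fiberDensity_pos_of_mem hx).ne', sub_self, zero_mul]
  · exact absurd h₀ (fiberDensity_pos_of_mem hx).ne'
  · rw [min_eq_right (not_lt.1 hlt)]
    field_simp
  · rw [min_eq_left hlt.le, sub_zero, one_mul]
  · rw [h₀, min_eq_left hδ.1, sub_zero, one_mul, div_one]
  · rw [min_eq_right (not_lt.1 hlt), sub_zero, sub_zero, one_mul]
    field_simp

lemma distort_nonneg (hδ : δ < 1) (hp : 0 ≤ p) : 0 ≤ distort ρ B δ p := fun x => by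
  refine mul_nonneg (sub_nonneg.2 ?_) (div_nonneg (hp x) (one_sub_min_pos hδ).le)
  split_ifs
  · exact div_le_one_of_le₀ (min_le_left _ _) (fiberDensity_nonneg x)
  · exact zero_le_one

lemma factorsThrough_distort {U : Type*} {σ : S → U} (hρ : ρ.FactorsThrough σ)
    (hB : FactorsThrough (· ∈ B) σ) (hp : p.FactorsThrough ρ) :
    (distort ρ B δ p).FactorsThrough σ := fun x y h => by
  have hmem : x ∈ B ↔ y ∈ B := iff_of_eq (hB h)
  simp only [distort, factorsThrough_fiberDensity (hρ h), hp (hρ h), hmem]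

lemma sum_mul_distort (hδ : δ ∈ Set.Ico 0 1) (hp : p.FactorsThrough ρ) {φ : S → ℝ}
    (hφ : φ.FactorsThrough ρ) : ∑ x, φ x * distort ρ B δ p x = ∑ x, φ x * p x := by
  set a := fiberDensity ρ B
  set m : S → ℝ := fun x => min (a x) δ
  have hm : (fun x => m x / a x * (φ x * (p x / (1 - m x)))).FactorsThrough ρ := fun x y h => by
    simp only [m, a, factorsThrough_fiberDensity h, hp h, hφ h]
  calc ∑ x, φ x * distort ρ B δ p x
      = ∑ x, φ x * (p x / (1 - m x)) - ∑ x ∈ B, m x / a x * (φ x * (p x / (1 - m x))) := by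
        rw [← Fintype.sum_ite_mem B, ← sum_sub_distrib]
        refine sum_congr rfl fun x _ => ?_
        unfold distort
        split_ifs <;> ring
    _ = ∑ x, φ x * (p x / (1 - m x)) - ∑ x, a x * (m x / a x) * (φ x * (p x / (1 - m x))) := by
        simp only [← sum_fiberDensity_mul hm, mul_assoc, a]
    _ = ∑ x, φ x * p x := by
        rw [← sum_sub_distrib]
        refine sum_congr rfl fun x _ => ?_
        have hpos : 0 < 1 - m x := one_sub_min_pos hδ.2
        have ham : a x * (m x / a x) = m x := mul_min_div_self (fiberDensity_nonneg x) hδ.1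
        rw [ham]
        field_simp

lemma sum_mem_distort_eq (hδ : δ ∈ Set.Ico 0 1) (hp : p.FactorsThrough ρ) :
    ∑ x ∈ B, distort ρ B δ p x =
      ∑ x, (fiberDensity ρ B x - min (fiberDensity ρ B x) δ) /
        (1 - min (fiberDensity ρ B x) δ) * p x := by
  set a := fiberDensity ρ B
  have hq : (fun x => (1 - min (a x) δ / a x) * (p x / (1 - min (a x) δ))).FactorsThrough ρ :=
    fun x y h => by simp only [a, factorsThrough_fiberDensity h, hp h]
  calc ∑ x ∈ B, distort ρ B δ p x
      = ∑ x ∈ B, (1 - min (a x) δ / a x) * (p x / (1 - min (a x) δ)) :=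
        sum_congr rfl fun x hx => by rw [distort, if_pos hx]
    _ = ∑ x, a x * ((1 - min (a x) δ / a x) * (p x / (1 - min (a x) δ))) :=
        (sum_fiberDensity_mul hq).symm
    _ = ∑ x, (a x - min (a x) δ) / (1 - min (a x) δ) * p x := sum_congr rfl fun x _ => by
        rw [← mul_assoc, mul_sub, mul_one, mul_min_div_self (fiberDensity_nonneg x) hδ.1]
        ring

lemma sum_mem_distort_le_momentBound (hδ : δ ∈ Set.Ico 0 1) (hp₀ : 0 ≤ p)
    (hp : p.FactorsThrough ρ) : ∑ x ∈ B, distort ρ B δ p x ≤ momentBound ρ B δ p := by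
  rw [sum_mem_distort_eq hδ hp]
  have hfirst : ∑ x, (fiberDensity ρ B x - min (fiberDensity ρ B x) δ) /
      (1 - min (fiberDensity ρ B x) δ) * p x ≤ ∑ x, fiberDensity ρ B x * p x :=
    sum_le_sum fun x _ => mul_le_mul_of_nonneg_right
      (sub_min_div_one_sub_min_le (fiberDensity_nonneg x) (fiberDensity_le_one x) hδ) (hp₀ x)
  unfold momentBound
  split_ifs with h₀
  · exact hfirst
  · refine le_min hfirst ?_
    simp only [sum_div, mul_div_right_comm]
    exact sum_le_sum fun x _ => mul_le_mul_of_nonneg_right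
      (sub_min_div_one_sub_min_le_sq_div ⟨hδ.1.lt_of_ne' h₀, hδ.2⟩) (hp₀ x)

end Distort

section DistortionSequence

open Finset Function

variable {S : Type*} {J : ℕ} {T : ℕ → Type*} {π : (j : ℕ) → S → T j}

lemma factorsThrough_of_le (hπ : ∀ j ∈ Icc 1 J, (π (j - 1)).FactorsThrough (π j)) {j k : ℕ}
    (hjk : j ≤ k) (hk : k ≤ J) : (π j).FactorsThrough (π k) := by
  induction k, hjk using Nat.le_induction with
  | base => exact .rfl
  | succ k _ ih => exact fun x y h => ih (by lia) (hπ (k + 1) (mem_Icc.2 ⟨by lia, hk⟩) h)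

variable [Fintype S] {B : ℕ → Finset S} {δ : ℕ → ℝ} {P : ℕ → S → ℝ}

lemma distort_iterate_nonneg (hδ : ∀ j ∈ Icc 1 J, δ j < 1) (hP₀ : 0 ≤ P 0)
    (hP : ∀ j ∈ Icc 1 J, P j = distort (π (j - 1)) (B j) (δ j) (P (j - 1))) :
    ∀ k ≤ J, 0 ≤ P k
  | 0, _ => hP₀
  | k + 1, hk => by
    have hmem : k + 1 ∈ Icc 1 J := mem_Icc.2 ⟨by lia, hk⟩
    rw [hP _ hmem]
    exact distort_nonneg (hδ _ hmem) (distort_iterate_nonneg hδ hP₀ hP k (by lia))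

lemma factorsThrough_distort_iterate (hπ : ∀ j ∈ Icc 1 J, (π (j - 1)).FactorsThrough (π j))
    (hB : ∀ j ∈ Icc 1 J, FactorsThrough (· ∈ B j) (π j)) (hP₀ : (P 0).FactorsThrough (π 0))
    (hP : ∀ j ∈ Icc 1 J, P j = distort (π (j - 1)) (B j) (δ j) (P (j - 1))) :
    ∀ k ≤ J, (P k).FactorsThrough (π k)
  | 0, _ => hP₀
  | k + 1, hk => by
    have hmem : k + 1 ∈ Icc 1 J := mem_Icc.2 ⟨by lia, hk⟩
    rw [hP _ hmem]
    exact factorsThrough_distort (hπ _ hmem) (hB _ hmem)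
      (factorsThrough_distort_iterate hπ hB hP₀ hP k (by lia))

lemma sum_mul_distort_iterate (hπ : ∀ j ∈ Icc 1 J, (π (j - 1)).FactorsThrough (π j))
    (hB : ∀ j ∈ Icc 1 J, FactorsThrough (· ∈ B j) (π j)) (hδ : ∀ j ∈ Icc 1 J, δ j ∈ Set.Ico 0 1)
    (hP₀ : (P 0).FactorsThrough (π 0))
    (hP : ∀ j ∈ Icc 1 J, P j = distort (π (j - 1)) (B j) (δ j) (P (j - 1)))
    {j k : ℕ} (hjk : j ≤ k) (hk : k ≤ J) {φ : S → ℝ} (hφ : φ.FactorsThrough (π j)) :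
    ∑ x, φ x * P k x = ∑ x, φ x * P j x := by
  induction k, hjk using Nat.le_induction with
  | base => rfl
  | succ k hjk ih =>
    have hmem : k + 1 ∈ Icc 1 J := mem_Icc.2 ⟨by lia, hk⟩
    have hφk : φ.FactorsThrough (π k) := fun x y h => hφ (factorsThrough_of_le hπ hjk (by lia) h)
    rw [hP _ hmem, ← ih (by lia)]
    exact sum_mul_distort (hδ _ hmem)
      (factorsThrough_distort_iterate hπ hB hP₀ hP k (by lia)) hφk

theorem distortion_method_general (hπ : ∀ j ∈ Icc 1 J, (π (j - 1)).FactorsThrough (π j))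
    (hB : ∀ j ∈ Icc 1 J, FactorsThrough (· ∈ B j) (π j)) (hδ : ∀ j ∈ Icc 1 J, δ j ∈ Set.Ico 0 1)
    (hP₀ : 0 ≤ P 0) (hP₀' : (P 0).FactorsThrough (π 0))
    (hP : ∀ j ∈ Icc 1 J, P j = distort (π (j - 1)) (B j) (δ j) (P (j - 1))) :
    ∑ x ∈ (Icc 1 J).biUnion B, P J x ≤
      ∑ j ∈ Icc 1 J, momentBound (π (j - 1)) (B j) (δ j) (P (j - 1)) := by
  have hnonneg := distort_iterate_nonneg (fun j hj => (hδ j hj).2) hP₀ hP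
  have hfactors := factorsThrough_distort_iterate hπ hB hP₀' hP
  refine (sum_biUnion_le_sum_sum (hnonneg J le_rfl) _ B).trans (sum_le_sum fun j hj => ?_)
  have hjJ : j ≤ J := (mem_Icc.1 hj).2
  have hind : (fun x => if x ∈ B j then (1 : ℝ) else 0).FactorsThrough (π j) := fun x y h => by
    simp only [iff_of_eq (hB j hj h)]
  calc ∑ x ∈ B j, P J x
      = ∑ x ∈ B j, P j x := by
        simpa using sum_mul_distort_iterate hπ hB hδ hP₀' hP hjJ le_rfl hind
    _ = ∑ x ∈ B j, distort (π (j - 1)) (B j) (δ j) (P (j - 1)) x := by rw [← hP j hj]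
    _ ≤ momentBound (π (j - 1)) (B j) (δ j) (P (j - 1)) :=
        sum_mem_distort_le_momentBound (hδ j hj) (hnonneg _ (by lia)) (hfactors _ (by lia))

end DistortionSequence

/-- The distortion method for an inverse system. -/
theorem distortion_method
    {S : Type*} [Fintype S] [Nonempty S]
    (J : ℕ) (hJ : 1 ≤ J)
    (T : ℕ → Type*) (π : (j : ℕ) → S → T j)
    (hinv : ∀ j ∈ Finset.Icc 1 J, ∀ x x' : S, π j x = π j x' → π (j - 1) x = π (j - 1) x')
    (B : ℕ → Finset S)
    (δ : ℕ → ℝ) (hδ : ∀ j ∈ Finset.Icc 1 J, δ j ∈ Set.Icc (0 : ℝ) (1 / 2))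
    (F : ℕ → S → Finset S)
    (hF : ∀ (j : ℕ) (x : S), F j x = Finset.univ.filter fun x' => π j x' = π j x)
    (α : ℕ → S → ℝ)
    (hα : ∀ j ∈ Finset.Icc 1 J, ∀ x : S,
      α j x = ((F (j - 1) x ∩ B j).card : ℝ) / ((F (j - 1) x).card : ℝ))
    (P : ℕ → S → ℝ)
    (hP0nonneg : ∀ x : S, 0 ≤ P 0 x) (hP0sum : ∑ x : S, P 0 x = 1)
    (hP0meas : ∀ x x' : S, π 0 x = π 0 x' → P 0 x = P 0 x')
    (hPrec : ∀ j ∈ Finset.Icc 1 J, ∀ x : S,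
      P j x = if α j x < δ j then (if x ∈ B j then 0 else P (j - 1) x / (1 - α j x))
        else if α j x = 0 then P (j - 1) x
        else P (j - 1) x * (α j x - (if x ∈ B j then δ j else 0)) / (α j x * (1 - δ j)))
    (hBmeas : ∀ j ∈ Finset.Icc 1 J, ∀ x ∈ B j, ∀ x' : S, π j x' = π j x → x' ∈ B j)
    (hsum : ∑ j ∈ Finset.Icc 1 J,
        (if δ j = 0 then ∑ x : S, α j x * P (j - 1) x
         else min (∑ x : S, α j x * P (j - 1) x)
           ((∑ x : S, (α j x) ^ 2 * P (j - 1) x) / (4 * δ j * (1 - δ j)))) < 1) :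
    ∑ x ∈ (Finset.Icc 1 J).biUnion B, P J x < 1 := by
  have hα' : ∀ j ∈ Finset.Icc 1 J, α j = fiberDensity (π (j - 1)) (B j) := fun j hj =>
    funext fun x => by rw [hα j hj, hF, Finset.filter_inter, Finset.univ_inter, fiberDensity]
  have hδ' : ∀ j ∈ Finset.Icc 1 J, δ j ∈ Set.Ico (0 : ℝ) 1 := fun j hj =>
    ⟨(hδ j hj).1, (hδ j hj).2.trans_lt one_half_lt_one⟩
  have hP : ∀ j ∈ Finset.Icc 1 J, P j = distort (π (j - 1)) (B j) (δ j) (P (j - 1)) :=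
    fun j hj => funext fun x => by rw [hPrec j hj, hα' j hj, distort_apply (hδ' j hj)]
  refine (distortion_method_general (fun j hj x x' => hinv j hj x x') (fun j hj x x' h => propext
    ⟨fun hx => hBmeas j hj x hx x' h.symm, fun hx => hBmeas j hj x' hx x h⟩) hδ'
    hP0nonneg (fun x x' => hP0meas x x') hP).trans_lt (hsum.trans_eq' ?_)
  exact Finset.sum_congr rfl fun j hj => by rw [momentBound, hα' j hj]
end
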